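/- Let $d \geq 3$ and let $(\delta_0,\ldots,\delta_d)$ be a sequence of nonnegative integers with $\delta_0 = 1$, $\delta_1 \geq \delta_d$, and $\sum_{i=0}^d \delta_i \leq 3$. Then there exists an integral polytope $\mathcal{P} \subset \mathbb{R}^d$ of dimension $d$ with $\delta(\mathcal{P}) = (\delta_0,\ldots,\delta_d)$ if and only if, with $s = \max\{i : \delta_i \neq 0\}$, the inequalities $\delta_0+\cdots+\delta_i \leq \delta_s+\delta_{s-1}+\cdots+\delta_{s-i}$ for $0 \leq i \leq \lfloor s/2 \rfloor$ and $\delta_{d-1}+\cdots+\delta_{d-i} \leq \delta_2+\cdots+\delta_{i+1}$ for $1 \leq i \leq \lfloor (d-1)/2 \rfloor$ all hold. -/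

import Mathlib

open Set Pointwise

/-- The number of lattice points in the `n`-th dilation of `P ⊆ ℝ^N`. -/
noncomputable def ehr {N : ℕ} (P : Set (Fin N → ℝ)) (n : ℕ) : ℕ :=
  Set.ncard {x : Fin N → ℤ | (fun i => (x i : ℝ)) ∈ (n : ℝ) • P}

/-- The `i`-th coefficient of `(1-λ)^(d+1) * (1 + ∑_{n ≥ 1} i(P,n) λ^n)`,
i.e. the `i`-th entry of the δ-vector of a `d`-dimensional integral polytope. -/
noncomputable def deltaVec {N : ℕ} (P : Set (Fin N → ℝ)) (d i : ℕ) : ℤ :=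
  ∑ j ∈ Finset.range (i + 1),
    (-1 : ℤ) ^ (i - j) * (Nat.choose (d + 1) (i - j) : ℤ) * (ehr P j : ℤ)

/-- `P ⊆ ℝ^N` is an integral polytope of dimension `d`. -/
def IsIntegralPolytope {N : ℕ} (P : Set (Fin N → ℝ)) (d : ℕ) : Prop :=
  ∃ V : Finset (Fin N → ℤ), V.Nonempty ∧
    P = convexHull ℝ ((fun v i => ((v i : ℝ))) '' (V : Set (Fin N → ℤ))) ∧
    Module.finrank ℝ (vectorSpan ℝ P) = d

section BoxCount

variable {ι : Type*}

/-- The elements of `Λ` in the half-open unit cube, with `(0, 1]` in the coordinates in `F`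
and `[0, 1)` in the others. -/
def halfOpenBox (Λ : AddSubgroup (ι → ℝ)) (F : Set ι) : Set (ι → ℝ) :=
  {x | x ∈ Λ ∧ ∀ i, (i ∈ F → 0 < x i ∧ x i ≤ 1) ∧ (i ∉ F → 0 ≤ x i ∧ x i < 1)}

theorem halfOpenBox_nonneg {Λ : AddSubgroup (ι → ℝ)} {F : Set ι} {x : ι → ℝ}
    (hx : x ∈ halfOpenBox Λ F) (i : ι) : 0 ≤ x i := by
  by_cases h : i ∈ F
  · exact ((hx.2 i).1 h).1.le
  · exact ((hx.2 i).2 h).1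

theorem zero_mem_halfOpenBox (Λ : AddSubgroup (ι → ℝ)) : 0 ∈ halfOpenBox Λ ∅ :=
  ⟨Λ.zero_mem, fun _ => ⟨fun h => h.elim, fun _ => ⟨le_rfl, zero_lt_one⟩⟩⟩

theorem mem_halfOpenBox_empty {Λ : AddSubgroup (ι → ℝ)} {x : ι → ℝ} (hx : x ∈ halfOpenBox Λ ∅)
    (i : ι) : 0 ≤ x i ∧ x i < 1 :=
  (hx.2 i).2 fun h => h.elim

variable [Fintype ι]

/-- The elements of `Λ` in the cone of nonnegative vectors, positive on `F`, of coordinate sum `n`. -/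
def coneSlice (Λ : AddSubgroup (ι → ℝ)) (F : Set ι) (n : ℕ) : Set (ι → ℝ) :=
  {x | x ∈ Λ ∧ (∀ i, 0 ≤ x i) ∧ (∀ i ∈ F, 0 < x i) ∧ ∑ i, x i = n}

/-- The elements of the half-open box of coordinate sum `n`. -/
def boxSlice (Λ : AddSubgroup (ι → ℝ)) (F : Set ι) (n : ℕ) : Set (ι → ℝ) :=
  {x | x ∈ halfOpenBox Λ F ∧ ∑ i, x i = n}

/-- `Λ` contains the integer vectors, its coordinate sums are integers, and it has finitely many
nonnegative elements of each coordinate sum. -/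
structure IsConeLattice (Λ : AddSubgroup (ι → ℝ)) : Prop where
  int_mem : ∀ z : ι → ℤ, (fun i => (z i : ℝ)) ∈ Λ
  sum_int : ∀ x ∈ Λ, ∃ z : ℤ, ∑ i, x i = z
  finite : ∀ n, (coneSlice Λ ∅ n).Finite

theorem coneSlice_finite {Λ : AddSubgroup (ι → ℝ)} (hΛ : IsConeLattice Λ) (F : Set ι) (n : ℕ) :
    (coneSlice Λ F n).Finite :=
  (hΛ.finite n).subset fun _ hx => ⟨hx.1, hx.2.1, fun _ h => h.elim, hx.2.2.2⟩

theorem boxSlice_finite {Λ : AddSubgroup (ι → ℝ)} (hΛ : IsConeLattice Λ) (F : Set ι) (n : ℕ) :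
    (boxSlice Λ F n).Finite :=
  (hΛ.finite n).subset fun _ hx =>
    ⟨hx.1.1, halfOpenBox_nonneg hx.1, fun _ h => h.elim, hx.2⟩

theorem exists_nat_sum_of_nonneg {Λ : AddSubgroup (ι → ℝ)} (hΛ : IsConeLattice Λ) {x : ι → ℝ}
    (hx : x ∈ Λ) (h0 : ∀ i, 0 ≤ x i) : ∃ n : ℕ, ∑ i, x i = n := by
  obtain ⟨z, hz⟩ := hΛ.sum_int x hx
  have : (0 : ℝ) ≤ z := hz ▸ Finset.sum_nonneg fun i _ => h0 i
  lift z to ℕ using by exact_mod_cast this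
  exact ⟨z, by simpa using hz⟩

theorem halfOpen_unique {F : Prop} {a b : ℝ} {m n : ℕ}
    (ha : (F → 0 < a ∧ a ≤ 1) ∧ (¬ F → 0 ≤ a ∧ a < 1))
    (hb : (F → 0 < b ∧ b ≤ 1) ∧ (¬ F → 0 ≤ b ∧ b < 1)) (h : a + m = b + n) : m = n := by
  have h1 : (m : ℝ) < n + 1 ∧ (n : ℝ) < m + 1 := by
    by_cases hF : F
    · have := ha.1 hF; have := hb.1 hF; constructor <;> linarith
    · have := ha.2 hF; have := hb.2 hF; constructor <;> linarith
  have h2 : m < n + 1 := by exact_mod_cast h1.1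
  have h3 : n < m + 1 := by exact_mod_cast h1.2
  omega

theorem halfOpen_exists {F : Prop} {a : ℝ} (h0 : 0 ≤ a) (hF : F → 0 < a) :
    ∃ m : ℕ, (F → 0 < a - m ∧ a - m ≤ 1) ∧ (¬ F → 0 ≤ a - m ∧ a - m < 1) := by
  by_cases h : F
  · have h1 : 0 < ⌈a⌉₊ := Nat.ceil_pos.2 (hF h)
    obtain ⟨m, hm⟩ : ∃ m, ⌈a⌉₊ = m + 1 := ⟨_, (Nat.succ_pred_eq_of_pos h1).symm⟩
    have h2 := Nat.ceil_lt_add_one h0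
    have h3 := Nat.le_ceil a
    rw [hm] at h2 h3
    push_cast at h2 h3
    exact ⟨m, fun _ => ⟨by linarith, by linarith⟩, fun h' => (h' h).elim⟩
  · have h2 := Nat.floor_le h0
    have h3 := Nat.lt_floor_add_one a
    exact ⟨⌊a⌋₊, fun h' => (h h').elim, fun _ => ⟨by linarith, by linarith⟩⟩

open Finset in
theorem ncard_coneSlice [DecidableEq ι] {Λ : AddSubgroup (ι → ℝ)} (hΛ : IsConeLattice Λ)
    (F : Set ι) (n : ℕ) :
    (coneSlice Λ F n).ncard = ∑ p ∈ antidiagonal n,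
      (boxSlice Λ F p.1).ncard * ((univ : Finset ι).finsuppAntidiag p.2).card := by
  classical
  rw [Set.ncard_eq_toFinset_card _ (coneSlice_finite hΛ F n)]
  simp_rw [fun h => Set.ncard_eq_toFinset_card _ (boxSlice_finite hΛ F h), ← card_product]
  rw [← card_sigma]
  symm
  refine card_bij (fun q _ => fun t => q.2.1 t + (q.2.2 t : ℝ)) ?_ ?_ ?_
  · rintro ⟨p, g, m⟩ h
    simp only [mem_sigma, HasAntidiagonal.mem_antidiagonal, mem_product, Set.Finite.mem_toFinset,
      mem_finsuppAntidiag] at h ⊢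
    obtain ⟨h1, ⟨h2, h3⟩, h4, -⟩ := h
    refine ⟨Λ.add_mem h2.1 (hΛ.int_mem fun t => (m t : ℤ)), fun i => ?_, fun i hi => ?_, ?_⟩
    · exact add_nonneg (halfOpenBox_nonneg h2 i) (Nat.cast_nonneg _)
    · exact add_pos_of_pos_of_nonneg ((h2.2 i).1 hi).1 (Nat.cast_nonneg _)
    · rw [sum_add_distrib, h3, ← Nat.cast_sum, h4, ← h1]; push_cast; rfl
  · rintro ⟨p, g, m⟩ h ⟨p', g', m'⟩ h' e
    simp only [mem_sigma, HasAntidiagonal.mem_antidiagonal, mem_product, Set.Finite.mem_toFinset,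
      mem_finsuppAntidiag] at h h'
    obtain ⟨h1, ⟨h2, h3⟩, h4, -⟩ := h
    obtain ⟨h1', ⟨h2', h3'⟩, h4', -⟩ := h'
    have hm : m = m' := by
      ext t
      exact halfOpen_unique (h2.2 t) (h2'.2 t) (congrFun e t)
    subst hm
    have hg : g = g' := by
      funext t
      have := congrFun e t
      simpa using this
    subst hg
    have : p = p' := by
      ext
      · rw [h3] at h3'; exact_mod_cast h3'
      · rw [← h4, ← h4']
    subst this
    rfl
  · intro x hx
    simp only [Set.Finite.mem_toFinset] at hx
    choose m hm using fun i => halfOpen_exists (F := i ∈ F) (hx.2.1 i) (hx.2.2.1 i)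
    have hg : (fun i => x i - m i) ∈ halfOpenBox Λ F :=
      ⟨Λ.sub_mem hx.1 (hΛ.int_mem fun t => (m t : ℤ)), hm⟩
    obtain ⟨h, hh⟩ := exists_nat_sum_of_nonneg hΛ hg.1 (halfOpenBox_nonneg hg)
    refine ⟨⟨(h, ∑ i, m i), (fun i => x i - m i), Finsupp.equivFunOnFinite.symm m⟩, ?_, ?_⟩
    · simp only [mem_sigma, HasAntidiagonal.mem_antidiagonal, mem_product, Set.Finite.mem_toFinset,
        mem_finsuppAntidiag]
      refine ⟨?_, ⟨hg, hh⟩, by simp, by simp⟩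
      have := hx.2.2.2
      rw [sum_sub_distrib] at hh
      have h' : ((h + ∑ i, m i : ℕ) : ℝ) = n := by push_cast; linarith
      exact_mod_cast h'
    · funext t
      simp

/-- The `i`-th coefficient of `(1 - X) ^ (d + 1) * ∑ f n X ^ n`. -/
def deltaOp (d : ℕ) (f : ℕ → ℕ) (i : ℕ) : ℤ :=
  ∑ j ∈ Finset.range (i + 1), (-1 : ℤ) ^ (i - j) * (Nat.choose (d + 1) (i - j) : ℤ) * (f j : ℤ)

open PowerSeries in
theorem coeff_one_sub_X_pow_aux (d k : ℕ) :
    coeff k ((1 - X : ℤ⟦X⟧) ^ d) = (-1) ^ k * (d.choose k : ℤ) := by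
  have h : (1 - X : ℤ⟦X⟧) = PowerSeries.rescale (-1 : ℤ) (1 + X) := by
    simp [map_add, PowerSeries.rescale_X, sub_eq_add_neg]
  have h2 : (1 + X : ℤ⟦X⟧) ^ d = (((1 + Polynomial.X : Polynomial ℤ) ^ d : Polynomial ℤ) : ℤ⟦X⟧) := by
    simp
  rw [h, ← map_pow, PowerSeries.coeff_rescale, h2, Polynomial.coeff_coe,
    Polynomial.coeff_one_add_X_pow]

open PowerSeries in
theorem deltaOp_eq_coeff (d : ℕ) (f : ℕ → ℕ) (i : ℕ) :
    deltaOp d f i = coeff i (PowerSeries.mk (fun n => (f n : ℤ)) * (1 - X) ^ (d + 1)) := by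
  rw [coeff_mul, Finset.Nat.sum_antidiagonal_eq_sum_range_succ_mk, deltaOp]
  refine Finset.sum_congr rfl fun j _ => ?_
  simp only [coeff_mk, coeff_one_sub_X_pow_aux]
  ring

open PowerSeries in
theorem deltaOp_coneSlice {Λ : AddSubgroup (ι → ℝ)} (hΛ : IsConeLattice Λ)
    (F : Set ι) {d : ℕ} (hd : Fintype.card ι = d + 1) (i : ℕ) :
    deltaOp d (fun n => (coneSlice Λ F n).ncard) i = (boxSlice Λ F i).ncard := by
  classical
  have h1 : PowerSeries.mk (fun n => ((coneSlice Λ F n).ncard : ℤ)) =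
      PowerSeries.mk (fun n => ((boxSlice Λ F n).ncard : ℤ)) * (PowerSeries.mk 1) ^ (d + 1) := by
    ext n
    have h2 : ((PowerSeries.mk 1 : ℤ⟦X⟧)) ^ (d + 1) = ∏ _i : ι, PowerSeries.mk 1 := by
      simp [hd]
    rw [coeff_mk, ncard_coneSlice hΛ, coeff_mul, h2]
    push_cast
    refine Finset.sum_congr rfl fun p _ => ?_
    rw [PowerSeries.coeff_prod]
    simp
  rw [deltaOp_eq_coeff, h1, mul_assoc, ← mul_pow, mk_one_mul_one_sub_eq_one, one_pow, mul_one,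
    coeff_mk]

end BoxCount

/-- The sequences of total at most three that are `δ`-vectors of `d`-dimensional simplices. -/
def IsSmallShape (d : ℕ) (δv : ℕ → ℕ) : Prop :=
  (∀ j, δv j = if j = 0 then 1 else 0) ∨
  (∃ k, 1 ≤ k ∧ 2 * k ≤ d + 1 ∧
    ∀ j, δv j = (if j = 0 then 1 else 0) + if j = k then 1 else 0) ∨
  ∃ a b, 1 ≤ a ∧ a ≤ b ∧ b ≤ 2 * a ∧ a + b ≤ d + 1 ∧
    ∀ j, δv j = (if j = 0 then 1 else 0) + (if j = a then 1 else 0) + if j = b then 1 else 0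

section BoxGroup

variable {ι : Type*} [Fintype ι]

theorem sum_le_of_mem_halfOpenBox {Λ : AddSubgroup (ι → ℝ)} {F : Set ι} {d n : ℕ}
    (hd : Fintype.card ι = d + 1) (hF : ∃ i, i ∉ F) {x : ι → ℝ}
    (hx : x ∈ halfOpenBox Λ F) (hn : ∑ i, x i = n) : n ≤ d := by
  obtain ⟨i, hi⟩ := hF
  have h1 : ∑ i, x i < ∑ _i : ι, (1 : ℝ) := by
    refine Finset.sum_lt_sum (fun j _ => ?_) ⟨i, Finset.mem_univ _, ((hx.2 i).2 hi).2⟩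
    by_cases h : j ∈ F
    · exact ((hx.2 j).1 h).2
    · exact ((hx.2 j).2 h).2.le
  rw [hn] at h1
  simp only [Finset.sum_const, Finset.card_univ, hd, nsmul_eq_mul, mul_one] at h1
  have : n < d + 1 := by exact_mod_cast h1
  omega

theorem halfOpenBox_finite_ncard {Λ : AddSubgroup (ι → ℝ)} (hΛ : IsConeLattice Λ) {F : Set ι}
    {d : ℕ} (hd : Fintype.card ι = d + 1) (hF : ∃ i, i ∉ F) :
    (halfOpenBox Λ F).Finite ∧
      (halfOpenBox Λ F).ncard = ∑ i ∈ Finset.range (d + 1), (boxSlice Λ F i).ncard := by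
  classical
  have h1 : halfOpenBox Λ F =
      ((Finset.range (d + 1)).biUnion fun i => (boxSlice_finite hΛ F i).toFinset : Finset _) := by
    ext x
    simp only [Finset.coe_biUnion, Set.mem_iUnion, Finset.mem_coe, Set.Finite.coe_toFinset,
      Finset.mem_range]
    constructor
    · intro hx
      obtain ⟨n, hn⟩ := exists_nat_sum_of_nonneg hΛ hx.1 (halfOpenBox_nonneg hx)
      exact ⟨n, Nat.lt_succ_of_le (sum_le_of_mem_halfOpenBox hd hF hx hn), hx, hn⟩
    · rintro ⟨n, -, hx⟩
      exact hx.1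
  refine ⟨h1 ▸ Finset.finite_toSet _, ?_⟩
  rw [h1, Set.ncard_coe_finset, Finset.card_biUnion]
  · exact Finset.sum_congr rfl fun i _ => (Set.ncard_eq_toFinset_card _ _).symm
  · intro i _ j _ hij
    rw [Function.onFun, Finset.disjoint_left]
    intro x hx hx'
    simp only [Set.Finite.mem_toFinset] at hx hx'
    exact hij (by exact_mod_cast hx.2.symm.trans hx'.2)

theorem fract_mem_halfOpenBox {Λ : AddSubgroup (ι → ℝ)} (hΛ : IsConeLattice Λ) {x : ι → ℝ}
    (hx : x ∈ Λ) : (fun i => Int.fract (x i)) ∈ halfOpenBox Λ ∅ :=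
  ⟨Λ.sub_mem hx (hΛ.int_mem fun i => ⌊x i⌋), fun _ =>
    ⟨fun h => h.elim, fun _ => ⟨Int.fract_nonneg _, Int.fract_lt_one _⟩⟩⟩

theorem eq_zero_of_fract_add_eq {a b : ℝ} (h0 : 0 ≤ a) (h1 : a < 1)
    (h : Int.fract (a + b) = b) : a = 0 := by
  have h2 : a = ⌊a + b⌋ := by
    have := Int.fract_add_floor (a + b)
    linarith
  have h3 : (⌊a + b⌋ : ℤ) = 0 := by
    have h4 : (-1 : ℝ) < ⌊a + b⌋ := by linarith
    have h5 : (⌊a + b⌋ : ℝ) < 1 := by linarith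
    have h6 : -1 < ⌊a + b⌋ := by exact_mod_cast h4
    have h7 : ⌊a + b⌋ < 1 := by exact_mod_cast h5
    omega
  rw [h2, h3, Int.cast_zero]

theorem le_one_of_fract_eq_zero {a : ℝ} (h1 : a < 2) (h : Int.fract a = 0) : a ≤ 1 := by
  have h2 : a = ⌊a⌋ := by
    have := Int.fract_add_floor a
    linarith
  have h3 : ⌊a⌋ < 2 := by
    rw [h2] at h1
    exact_mod_cast h1
  rw [h2]
  exact_mod_cast Int.lt_add_one_iff.1 h3

theorem eq_of_fract_add_eq_zero {a b c : ℝ} (ha : 0 ≤ a) (ha' : a < 1) (hb : 0 ≤ b) (hb' : b < 1)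
    (h : Int.fract (a + c) = 0) (h' : Int.fract (b + c) = 0) : a = b := by
  have h1 : Int.fract a = Int.fract b := by
    rw [Int.fract_eq_fract]
    have h2 := Int.fract_add_floor (a + c)
    have h3 := Int.fract_add_floor (b + c)
    refine ⟨⌊a + c⌋ - ⌊b + c⌋, ?_⟩
    push_cast
    linarith
  rwa [Int.fract_eq_self.2 ⟨ha, ha'⟩, Int.fract_eq_self.2 ⟨hb, hb'⟩] at h1

theorem one_le_sum_of_ne_zero {Λ : AddSubgroup (ι → ℝ)} {F : Set ι} {x : ι → ℝ} {n : ℕ}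
    (hx : x ∈ halfOpenBox Λ F) (hn : ∑ i, x i = n) (h0 : x ≠ 0) : 1 ≤ n := by
  by_contra! h
  obtain rfl : n = 0 := by omega
  rw [Nat.cast_zero, Finset.sum_eq_zero_iff_of_nonneg fun i _ => halfOpenBox_nonneg hx i] at hn
  exact h0 (funext fun i => hn i (Finset.mem_univ _))

theorem sum_le_of_fract_add_eq_zero {d : ℕ} (hd : Fintype.card ι = d + 1) {g h : ι → ℝ} {a b : ℕ}
    (hg : ∀ i, 0 ≤ g i ∧ g i < 1) (hh : ∀ i, 0 ≤ h i ∧ h i < 1)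
    (ha : ∑ i, g i = a) (hb : ∑ i, h i = b) (h0 : ∀ i, Int.fract (g i + h i) = 0) :
    a + b ≤ d + 1 := by
  have h1 : ∑ i, (g i + h i) ≤ ∑ _i : ι, (1 : ℝ) :=
    Finset.sum_le_sum fun i _ => le_one_of_fract_eq_zero (by linarith [hg i, hh i]) (h0 i)
  rw [Finset.sum_add_distrib, ha, hb] at h1
  simp only [Finset.sum_const, Finset.card_univ, hd, nsmul_eq_mul, mul_one] at h1
  exact_mod_cast h1

theorem le_two_mul_of_fract_add_self_eq {g h : ι → ℝ} {a b : ℕ} (hg : ∀ i, 0 ≤ g i)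
    (ha : ∑ i, g i = a) (hb : ∑ i, h i = b) (h0 : (fun i => Int.fract (g i + g i)) = h) :
    b ≤ 2 * a := by
  have h1 : ∑ i, h i ≤ ∑ i, (g i + g i) := Finset.sum_le_sum fun i _ => by
    rw [← h0]
    have := Int.fract_add_floor (g i + g i)
    have h2 : (0 : ℝ) ≤ ⌊g i + g i⌋ := by
      exact_mod_cast Int.floor_nonneg.2 (add_nonneg (hg i) (hg i))
    linarith
  rw [Finset.sum_add_distrib, ha, hb, ← two_mul] at h1
  exact_mod_cast h1

theorem isSmallShape_of_boxSlice {Λ : AddSubgroup (ι → ℝ)} (hΛ : IsConeLattice Λ) {d : ℕ}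
    (hd : Fintype.card ι = d + 1) {δv : ℕ → ℕ} (hzero : ∀ i, d < i → δv i = 0)
    (hδ : ∀ i ≤ d, (boxSlice Λ ∅ i).ncard = δv i)
    (hsum : ∑ i ∈ Finset.range (d + 1), δv i ≤ 3) : IsSmallShape d δv := by
  classical
  obtain ⟨hfin, hcard⟩ := halfOpenBox_finite_ncard hΛ (F := ∅) hd
    ((Fintype.card_pos_iff.1 (by omega)).elim fun i => ⟨i, id⟩)
  rw [Finset.sum_congr rfl fun i hi => hδ i (Nat.lt_succ_iff.1 (Finset.mem_range.1 hi))] at hcard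
  set B := hfin.toFinset with hB
  have hmem : ∀ x, x ∈ B ↔ x ∈ halfOpenBox Λ ∅ := fun x => hfin.mem_toFinset
  have hB3 : B.card ≤ 3 := by
    rw [hB, ← Set.ncard_eq_toFinset_card _ hfin, hcard]
    exact hsum
  have hδB : ∀ j, δv j = (B.filter fun x => ∑ i, x i = (j : ℝ)).card := by
    intro j
    rcases le_or_gt j d with hj | hj
    · rw [← hδ j hj, ← Set.ncard_coe_finset]
      congr 1
      ext x
      simp [boxSlice, hmem]
    · rw [hzero j hj, eq_comm, Finset.card_eq_zero, Finset.filter_eq_empty_iff]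
      intro x hx hn
      have := sum_le_of_mem_halfOpenBox hd
        ((Fintype.card_pos_iff.1 (by omega)).elim fun i => ⟨i, id⟩) ((hmem x).1 hx) hn
      omega
  have h0 : (0 : ι → ℝ) ∈ B := (hmem 0).2 (zero_mem_halfOpenBox Λ)
  have hht : ∀ x ∈ B, ∃ n : ℕ, ∑ i, x i = n := fun x hx =>
    exists_nat_sum_of_nonneg hΛ ((hmem x).1 hx).1 (halfOpenBox_nonneg ((hmem x).1 hx))
  have hadd : ∀ x ∈ B, ∀ y ∈ B, (fun i => Int.fract (x i + y i)) ∈ B := fun x hx y hy =>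
    (hmem _).2 (fract_mem_halfOpenBox hΛ (Λ.add_mem ((hmem x).1 hx).1 ((hmem y).1 hy).1))
  have hne : ∀ x ∈ B, x ≠ 0 → ∀ y, (fun i => Int.fract (x i + y i)) ≠ y := fun x hx h y e =>
    h (funext fun i => by
      have := mem_halfOpenBox_empty ((hmem x).1 hx) i
      exact eq_zero_of_fract_add_eq this.1 this.2 (congrFun e i))
  have hBe : B = insert 0 (B.erase 0) := (Finset.insert_erase h0).symm
  have hc : (B.erase 0).card ≤ 2 := by rw [Finset.card_erase_of_mem h0]; omega
  have hc' : (B.erase 0).card = 0 ∨ (B.erase 0).card = 1 ∨ (B.erase 0).card = 2 := by omega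
  have e0 : ∀ j : ℕ, (∑ i : ι, (0 : ι → ℝ) i = j) ↔ j = 0 := fun j => by
    simp [eq_comm]
  rcases hc' with hc | hc | hc
  · left
    rw [Finset.card_eq_zero.1 hc] at hBe
    intro j
    rw [hδB, hBe, Finset.filter_insert]
    simp only [e0]
    split_ifs <;> simp
  · obtain ⟨g, hg⟩ := Finset.card_eq_one.1 hc
    rw [hg] at hBe
    have hgB : g ∈ B := by simp [hBe]
    have hg0 : g ≠ 0 := by
      have : g ∈ B.erase 0 := by simp [hg]
      exact Finset.ne_of_mem_erase this
    obtain ⟨k, hk⟩ := hht g hgB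
    right; left
    have hgb := mem_halfOpenBox_empty ((hmem g).1 hgB)
    refine ⟨k, one_le_sum_of_ne_zero ((hmem g).1 hgB) hk hg0, ?_, ?_⟩
    · have h1 := hadd g hgB g hgB
      have h2 := hne g hgB hg0 g
      rw [hBe] at h1
      simp only [Finset.mem_insert, Finset.mem_singleton, h2, or_false] at h1
      have := sum_le_of_fract_add_eq_zero hd hgb hgb hk hk (congrFun h1)
      omega
    · intro j
      rw [hδB, hBe, Finset.filter_insert, Finset.filter_singleton, hk]
      simp only [e0, Nat.cast_inj, eq_comm (a := k)]
      split_ifs <;> simp [hg0.symm]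
  · obtain ⟨g, h, hgh, hg⟩ := Finset.card_eq_two.1 hc
    wlog hab : ∑ i, g i ≤ ∑ i, h i generalizing g h
    · exact this h g hgh.symm (by rw [hg, Finset.pair_comm]) (le_of_not_ge hab)
    rw [hg] at hBe
    have hgB : g ∈ B := by simp [hBe]
    have hhB : h ∈ B := by simp [hBe]
    have hg0 : g ≠ 0 := by
      have : g ∈ B.erase 0 := by simp [hg]
      exact Finset.ne_of_mem_erase this
    have hh0 : h ≠ 0 := by
      have : h ∈ B.erase 0 := by simp [hg]
      exact Finset.ne_of_mem_erase this
    obtain ⟨a, ha⟩ := hht g hgB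
    obtain ⟨b, hb⟩ := hht h hhB
    have hgb := mem_halfOpenBox_empty ((hmem g).1 hgB)
    have hhb := mem_halfOpenBox_empty ((hmem h).1 hhB)
    have hgh0 : (fun i => Int.fract (g i + h i)) = 0 := by
      have h1 := hadd g hgB h hhB
      have h2 := hne g hgB hg0 h
      have h3 := hne h hhB hh0 g
      simp only [add_comm (h _)] at h3
      rw [hBe] at h1
      simpa only [Finset.mem_insert, Finset.mem_singleton, h2, h3, or_false] using h1
    have hgg : (fun i => Int.fract (g i + g i)) = h := by
      have h1 := hadd g hgB g hgB
      have h2 := hne g hgB hg0 g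
      rw [hBe] at h1
      simp only [Finset.mem_insert, Finset.mem_singleton, h2, false_or] at h1
      refine h1.resolve_left fun h3 => hgh (funext fun i => ?_)
      have h4 := congrFun hgh0 i
      simp only [add_comm (g i)] at h4
      exact eq_of_fract_add_eq_zero (hgb i).1 (hgb i).2 (hhb i).1 (hhb i).2 (congrFun h3 i) h4
    right; right
    refine ⟨a, b, one_le_sum_of_ne_zero ((hmem g).1 hgB) ha hg0, ?_,
      le_two_mul_of_fract_add_self_eq (fun i => (hgb i).1) ha hb hgg,
      sum_le_of_fract_add_eq_zero hd hgb hhb ha hb (congrFun hgh0), ?_⟩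
    · rw [ha, hb] at hab
      exact_mod_cast hab
    · intro j
      rw [hδB, hBe, Finset.filter_insert, Finset.filter_insert, Finset.filter_singleton, ha, hb]
      simp only [e0, Nat.cast_inj, eq_comm (a := a), eq_comm (a := b)]
      split_ifs <;> simp [hg0.symm, hh0.symm, hgh]

end BoxGroup

section Arithmetic

theorem exists_shape {d : ℕ} {δv : ℕ → ℕ} (h0 : δv 0 = 1) (hzero : ∀ i, d < i → δv i = 0)
    (hsum : ∑ i ∈ Finset.range (d + 1), δv i ≤ 3) :
    (∀ j, δv j = if j = 0 then 1 else 0) ∨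
    (∃ k, 1 ≤ k ∧ k ≤ d ∧ ∀ j, δv j = (if j = 0 then 1 else 0) + if j = k then 1 else 0) ∨
    ∃ a b, 1 ≤ a ∧ a ≤ b ∧ b ≤ d ∧
      ∀ j, δv j = (if j = 0 then 1 else 0) + (if j = a then 1 else 0) + if j = b then 1 else 0 := by
  have hle : ∀ (f : ℕ → ℕ) i, i ≤ d → f i ≤ ∑ i ∈ Finset.range (d + 1), f i := fun f i hi =>
    Finset.single_le_sum (fun _ _ => Nat.zero_le _) (Finset.mem_range.2 (by omega))
  have hone : ∀ k, k ≤ d → ∑ j ∈ Finset.range (d + 1), (if j = k then 1 else 0) = 1 := by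
    intro k hk
    rw [Finset.sum_ite_eq' (Finset.range (d + 1)) k, if_pos (Finset.mem_range.2 (by omega))]
  have hpeel : ∀ (f : ℕ → ℕ) k, k ≤ d → f k ≠ 0 → (∀ i, d < i → f i = 0) →
      ∃ g : ℕ → ℕ, (∀ j, f j = (if j = k then 1 else 0) + g j) ∧ (∀ i, d < i → g i = 0) ∧
        ∑ i ∈ Finset.range (d + 1), f i = 1 + ∑ i ∈ Finset.range (d + 1), g i := by
    intro f k hk hf hz
    have h1 : ∀ j, f j = (if j = k then 1 else 0) + (f j - if j = k then 1 else 0) := by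
      intro j
      split_ifs with h
      · subst h; omega
      · omega
    refine ⟨fun j => f j - if j = k then 1 else 0, h1, fun i hi => ?_, ?_⟩
    · simp [hz i hi]
    · rw [Finset.sum_congr rfl fun j _ => h1 j, Finset.sum_add_distrib, hone k hk]
  obtain ⟨f, hf, hfz, hfs⟩ := hpeel δv 0 (Nat.zero_le _) (by omega) hzero
  have hf0 : f 0 = 0 := by have := hf 0; simp at this; omega
  by_cases hfne : ∃ a, f a ≠ 0
  · obtain ⟨a, ha⟩ := hfne
    have had : a ≤ d := by by_contra h; exact ha (hfz a (by omega))
    have ha1 : 1 ≤ a := by by_contra h; obtain rfl : a = 0 := by omega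
                           exact ha hf0
    obtain ⟨g, hg, hgz, hgs⟩ := hpeel f a had ha hfz
    have hg0 : g 0 = 0 := by have := hg 0; omega
    right
    by_cases hgne : ∃ b, g b ≠ 0
    · obtain ⟨b, hb⟩ := hgne
      have hbd : b ≤ d := by by_contra h; exact hb (hgz b (by omega))
      have hb1 : 1 ≤ b := by by_contra h; obtain rfl : b = 0 := by omega
                             exact hb hg0
      obtain ⟨e, he, hez, hes⟩ := hpeel g b hbd hb hgz
      have he0 : ∀ j, e j = 0 := fun j => by
        rcases le_or_gt j d with h | h
        · have := hle e j h; omega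
        · exact hez j h
      right
      rcases le_total a b with hab | hab
      · exact ⟨a, b, ha1, hab, hbd, fun j => by rw [hf, hg, he, he0]; ring⟩
      · exact ⟨b, a, hb1, hab, had, fun j => by rw [hf, hg, he, he0]; ring⟩
    · push Not at hgne
      exact Or.inl ⟨a, ha1, had, fun j => by rw [hf, hg, hgne]; ring⟩
  · push Not at hfne
    exact Or.inl fun j => by rw [hf, hfne]; ring

theorem sum_range_indicator_add (m k i : ℕ) :
    ∑ j ∈ Finset.range i, (if m + j = k then 1 else 0) = if m ≤ k ∧ k < m + i then 1 else 0 := by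
  by_cases h : m ≤ k ∧ k < m + i
  · rw [if_pos h, Finset.sum_eq_single (k - m)]
    · rw [if_pos (by omega)]
    · intro j _ hj
      rw [if_neg (by omega)]
    · intro hj
      exact (hj (Finset.mem_range.2 (by omega))).elim
  · rw [if_neg h, Finset.sum_eq_zero]
    intro j hj
    rw [Finset.mem_range] at hj
    rw [if_neg (by omega)]

theorem sum_range_indicator_sub (m k i : ℕ) (hi : i ≤ m + 1) :
    ∑ j ∈ Finset.range i, (if m - j = k then 1 else 0) = if k ≤ m ∧ m < k + i then 1 else 0 := by
  by_cases h : k ≤ m ∧ m < k + i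
  · rw [if_pos h, Finset.sum_eq_single (m - k)]
    · rw [if_pos (by omega)]
    · intro j hj hj'
      rw [Finset.mem_range] at hj
      rw [if_neg (by omega)]
    · intro hj
      exact (hj (Finset.mem_range.2 (by omega))).elim
  · rw [if_neg h, Finset.sum_eq_zero]
    intro j hj
    rw [Finset.mem_range] at hj
    rw [if_neg (by omega)]

theorem sum_range_indicator (k i : ℕ) :
    ∑ j ∈ Finset.range i, (if j = k then 1 else 0) = if k < i then 1 else 0 := by
  simp

set_option maxHeartbeats 1000000 in
theorem inequalities_iff_isSmallShape (d : ℕ) (hd : 3 ≤ d) (δv : ℕ → ℕ) (h0 : δv 0 = 1)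
    (hzero : ∀ i, d < i → δv i = 0) (h1d : δv d ≤ δv 1)
    (hsum : ∑ i ∈ Finset.range (d + 1), δv i ≤ 3)
    (s : ℕ) (hs1 : δv s ≠ 0) (hs2 : ∀ i, δv i ≠ 0 → i ≤ s) :
    ((∀ i ≤ s / 2, ∑ j ∈ Finset.range (i + 1), δv j ≤
        ∑ j ∈ Finset.range (i + 1), δv (s - j)) ∧
     (∀ i, 1 ≤ i → i ≤ (d - 1) / 2 →
        ∑ j ∈ Finset.range i, δv (d - 1 - j) ≤ ∑ j ∈ Finset.range i, δv (2 + j))) ↔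
    IsSmallShape d δv := by
  rcases exists_shape h0 hzero hsum with h | ⟨k, hk1, hkd, h⟩ | ⟨a, b, ha1, hab, hbd, h⟩
  · refine ⟨fun _ => Or.inl h, fun _ => ⟨fun i hi => ?_, fun i hi1 hi2 => ?_⟩⟩
    · obtain rfl : s = 0 := by rw [h] at hs1; by_contra h'; simp [h'] at hs1
      obtain rfl : i = 0 := by omega
      simp
    · simp only [h]
      rw [sum_range_indicator_sub _ _ _ (by omega), if_neg (by omega)]
      exact Nat.zero_le _
  · obtain rfl : s = k := by
      have h1 := hs2 k (by rw [h]; simp)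
      by_contra h2
      rw [h, if_neg (by omega), if_neg h2] at hs1
      exact hs1 rfl
    have hsd : s ≠ d := by
      rintro rfl
      rw [h, h, if_pos rfl, if_neg (by omega)] at h1d
      simp [show (1 : ℕ) ≠ s by omega] at h1d
    constructor
    · rintro ⟨-, H⟩
      refine Or.inr (Or.inl ⟨s, hk1, ?_, h⟩)
      by_contra hlt
      have H1 := H (d - s) (by omega) (by omega)
      simp only [h, Finset.sum_add_distrib] at H1
      rw [sum_range_indicator_sub _ _ _ (by omega), sum_range_indicator_sub _ _ _ (by omega),
        sum_range_indicator_add, sum_range_indicator_add] at H1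
      split_ifs at H1 <;> omega
    · intro H
      have hk2 : 2 * s ≤ d + 1 := by
        rcases H with H | ⟨k', -, hk', H⟩ | ⟨a, b, h1, h2, h3, h4, H⟩
        · have := (H s).symm.trans (h s); split_ifs at this <;> omega
        · have := (H s).symm.trans (h s)
          split_ifs at this <;> omega
        · have := (H s).symm.trans (h s)
          have := (H a).symm.trans (h a)
          split_ifs at * <;> omega
      refine ⟨fun i hi => ?_, fun i hi1 hi2 => ?_⟩
      · simp only [h, Finset.sum_add_distrib]
        rw [sum_range_indicator_sub _ _ _ (by omega), sum_range_indicator_sub _ _ _ (by omega),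
          sum_range_indicator, sum_range_indicator]
        split_ifs <;> omega
      · simp only [h, Finset.sum_add_distrib]
        rw [sum_range_indicator_sub _ _ _ (by omega), sum_range_indicator_sub _ _ _ (by omega),
          sum_range_indicator_add, sum_range_indicator_add]
        split_ifs <;> omega
  · obtain rfl : s = b := by
      have h1 := hs2 b (by rw [h]; simp)
      by_contra h2
      rw [h, if_neg (by omega), if_neg h2, if_neg (by omega)] at hs1
      exact hs1 rfl
    constructor
    · rintro ⟨H1, H2⟩
      have hba : s ≤ 2 * a := by
        by_contra hlt
        have H := H1 a (by omega)
        simp only [h, Finset.sum_add_distrib] at H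
        rw [sum_range_indicator_sub _ _ _ (by omega), sum_range_indicator_sub _ _ _ (by omega),
          sum_range_indicator_sub _ _ _ (by omega),
          sum_range_indicator, sum_range_indicator, sum_range_indicator] at H
        split_ifs at H <;> omega
      have hsd : s ≠ d := by
        rintro rfl
        rw [h, h] at h1d
        split_ifs at h1d <;> omega
      refine Or.inr (Or.inr ⟨a, s, ha1, hab, hba, ?_, h⟩)
      by_contra hlt
      have H := H2 (d - s) (by omega) (by omega)
      simp only [h, Finset.sum_add_distrib] at H
      rw [sum_range_indicator_sub _ _ _ (by omega), sum_range_indicator_sub _ _ _ (by omega),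
        sum_range_indicator_sub _ _ _ (by omega),
        sum_range_indicator_add, sum_range_indicator_add, sum_range_indicator_add] at H
      split_ifs at H <;> omega
    · intro H
      obtain ⟨hba, habd⟩ : s ≤ 2 * a ∧ a + s ≤ d + 1 := by
        rcases H with H | ⟨k', -, hk', H⟩ | ⟨a', b', h1, h2, h3, h4, H⟩
        · have := (H s).symm.trans (h s)
          split_ifs at this <;> omega
        · have e1 := (H s).symm.trans (h s)
          have e2 := (H a).symm.trans (h a)
          obtain rfl : s = k' := by split_ifs at e1 <;> omega
          split_ifs at e2 <;> omega
        · have e1 := (H s).symm.trans (h s)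
          have e2 := (H b').symm.trans (h b')
          have e3 := (H a).symm.trans (h a)
          have hle : s ≤ b' := by split_ifs at e1 <;> omega
          have hge : b' ≤ s := by split_ifs at e2 <;> omega
          obtain rfl : s = b' := le_antisymm hle hge
          obtain rfl : a = a' := by split_ifs at e3 <;> omega
          exact ⟨h3, h4⟩
      refine ⟨fun i hi => ?_, fun i hi1 hi2 => ?_⟩
      · simp only [h, Finset.sum_add_distrib]
        rw [sum_range_indicator_sub _ _ _ (by omega), sum_range_indicator_sub _ _ _ (by omega),
          sum_range_indicator_sub _ _ _ (by omega),
          sum_range_indicator, sum_range_indicator, sum_range_indicator]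
        split_ifs <;> omega
      · simp only [h, Finset.sum_add_distrib]
        rw [sum_range_indicator_sub _ _ _ (by omega), sum_range_indicator_sub _ _ _ (by omega),
          sum_range_indicator_sub _ _ _ (by omega),
          sum_range_indicator_add, sum_range_indicator_add, sum_range_indicator_add]
        split_ifs <;> omega

end Arithmetic

section ParamLattice

variable {d : ℕ} {ι : Type*} [Fintype ι]

/-- The real weights whose sum and whose weighted sum of the points `w` are integral. -/
def paramLattice (w : ι → Fin d → ℤ) : AddSubgroup (ι → ℝ) where
  carrier := {x | (∃ z : ℤ, ∑ i, x i = z) ∧ ∀ k, ∃ z : ℤ, ∑ i, x i * w i k = z}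
  zero_mem' := ⟨⟨0, by simp⟩, fun _ => ⟨0, by simp⟩⟩
  add_mem' := by
    rintro x y ⟨⟨a, ha⟩, hx⟩ ⟨⟨b, hb⟩, hy⟩
    refine ⟨⟨a + b, by simp [Finset.sum_add_distrib, ha, hb]⟩, fun k => ?_⟩
    obtain ⟨p, hp⟩ := hx k
    obtain ⟨q, hq⟩ := hy k
    exact ⟨p + q, by simp [add_mul, Finset.sum_add_distrib, hp, hq]⟩
  neg_mem' := by
    rintro x ⟨⟨a, ha⟩, hx⟩
    refine ⟨⟨-a, by simp [ha]⟩, fun k => ?_⟩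
    obtain ⟨p, hp⟩ := hx k
    exact ⟨-p, by simp [hp]⟩

theorem mem_paramLattice {w : ι → Fin d → ℤ} {x : ι → ℝ} : x ∈ paramLattice w ↔
    (∃ z : ℤ, ∑ i, x i = z) ∧ ∀ k, ∃ z : ℤ, ∑ i, x i * w i k = z :=
  Iff.rfl

/-- Affine independence of integer points over the reals, in coordinates. -/
def IsAffIndep (w : ι → Fin d → ℤ) : Prop :=
  ∀ x : ι → ℝ, ∑ i, x i = 0 → (∀ k, ∑ i, x i * w i k = 0) → x = 0

theorem isAffIndep_iff (w : ι → Fin d → ℤ) :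
    IsAffIndep w ↔ AffineIndependent ℝ fun i (k : Fin d) => (w i k : ℝ) := by
  rw [affineIndependent_iff_of_fintype]
  refine forall_congr' fun x => forall_congr' fun h => ?_
  rw [Finset.univ.weightedVSub_eq_linear_combination h]
  simp only [funext_iff, Finset.sum_apply, Pi.smul_apply, smul_eq_mul, Pi.zero_apply]

theorem IsAffIndep.eq {w : ι → Fin d → ℤ} (hw : IsAffIndep w) {x y : ι → ℝ}
    (h : ∑ i, x i = ∑ i, y i) (h' : ∀ k, ∑ i, x i * w i k = ∑ i, y i * w i k) : x = y :=
  sub_eq_zero.1 (hw (x - y) (by simp [h]) fun k => by simp [sub_mul, h'])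

/-- The convex hull of a family of integer points. -/
def hull (w : ι → Fin d → ℤ) : Set (Fin d → ℝ) :=
  convexHull ℝ (Set.range fun i (k : Fin d) => (w i k : ℝ))

theorem mem_hull {w : ι → Fin d → ℤ} {y : Fin d → ℝ} : y ∈ hull w ↔
    ∃ x : ι → ℝ, (∀ i, 0 ≤ x i) ∧ ∑ i, x i = 1 ∧ ∀ k, ∑ i, x i * w i k = y k := by
  classical
  have h : hull w = Fintype.linearCombination ℝ (fun i (k : Fin d) => (w i k : ℝ)) ''
      stdSimplex ℝ ι := by
    rw [← convexHull_rangle_single_eq_stdSimplex, LinearMap.image_convexHull, ← Set.range_comp,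
      hull]
    congr 2
    funext i
    simp
  rw [h]
  simp only [Set.mem_image, stdSimplex, Set.mem_ofPred_eq, funext_iff,
    Fintype.linearCombination_apply, Finset.sum_apply, Pi.smul_apply, smul_eq_mul, and_assoc]

theorem mem_smul_hull [Nonempty ι] {w : ι → Fin d → ℤ} {n : ℕ} {y : Fin d → ℝ} :
    y ∈ (n : ℝ) • hull w ↔
      ∃ x : ι → ℝ, (∀ i, 0 ≤ x i) ∧ ∑ i, x i = n ∧ ∀ k, ∑ i, x i * w i k = y k := by
  rw [Set.mem_smul_set]
  constructor
  · rintro ⟨z, hz, rfl⟩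
    obtain ⟨x, hx0, hx1, hx⟩ := mem_hull.1 hz
    refine ⟨fun i => n * x i, fun i => mul_nonneg (Nat.cast_nonneg _) (hx0 i), ?_, fun k => ?_⟩
    · rw [← Finset.mul_sum, hx1, mul_one]
    · simp [← hx k, Finset.mul_sum, mul_assoc]
  · rintro ⟨x, hx0, hx1, hx⟩
    rcases Nat.eq_zero_or_pos n with rfl | hn
    · inhabit ι
      refine ⟨_, subset_convexHull ℝ _ ⟨default, rfl⟩, ?_⟩
      rw [Nat.cast_zero, Finset.sum_eq_zero_iff_of_nonneg fun i _ => hx0 i] at hx1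
      funext k
      rw [← hx k, Finset.sum_eq_zero fun i hi => by rw [hx1 i hi, zero_mul]]
      simp
    · have hn' : (n : ℝ) ≠ 0 := by positivity
      refine ⟨fun k => y k / n, mem_hull.2 ⟨fun i => x i / n, fun i => ?_, ?_, fun k => ?_⟩, ?_⟩
      · exact div_nonneg (hx0 i) (Nat.cast_nonneg _)
      · rw [← Finset.sum_div, hx1, div_self hn']
      · simp only [div_mul_eq_mul_div]
        rw [← Finset.sum_div, hx k]
      · funext k
        simp [mul_div_cancel₀ _ hn']

/-- The lattice points that are combinations of the points `w` with nonnegative weights of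
total `n` that are positive on `F`. -/
def latticePoints (w : ι → Fin d → ℤ) (F : Set ι) (n : ℕ) : Set (Fin d → ℤ) :=
  {y | ∃ x : ι → ℝ, (∀ i, 0 ≤ x i) ∧ (∀ i ∈ F, 0 < x i) ∧ ∑ i, x i = n ∧
    ∀ k, ∑ i, x i * w i k = y k}

theorem latticePoints_finite (w : ι → Fin d → ℤ) (F : Set ι) (n : ℕ) :
    (latticePoints w F n).Finite := by
  refine (Set.finite_Icc (-fun k => ∑ i, (n : ℤ) * |w i k|)
    (fun k => ∑ i, (n : ℤ) * |w i k|)).subset ?_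
  rintro y ⟨x, hx0, -, hx1, hx⟩
  have h : ∀ k, |y k| ≤ ∑ i, (n : ℤ) * |w i k| := by
    intro k
    have h1 : |(y k : ℝ)| ≤ ∑ i, (n : ℝ) * |(w i k : ℝ)| := by
      rw [← hx k]
      refine (Finset.abs_sum_le_sum_abs _ _).trans (Finset.sum_le_sum fun i hi => ?_)
      rw [abs_mul, abs_of_nonneg (hx0 i)]
      refine mul_le_mul_of_nonneg_right ?_ (abs_nonneg _)
      rw [← hx1]
      exact Finset.single_le_sum (fun i _ => hx0 i) hi
    exact_mod_cast h1
  exact ⟨fun k => (abs_le.1 (h k)).1, fun k => (abs_le.1 (h k)).2⟩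

theorem exists_bijOn_coneSlice {w : ι → Fin d → ℤ} (hw : IsAffIndep w) (F : Set ι) (n : ℕ) :
    ∃ f, Set.BijOn f (latticePoints w F n) (coneSlice (paramLattice w) F n) := by
  classical
  choose! f hf using fun y (hy : y ∈ latticePoints w F n) => hy
  refine ⟨f, fun y hy => ?_, fun y hy y' hy' h => ?_, ?_⟩
  · obtain ⟨h0, hF, h1, h2⟩ := hf y hy
    exact ⟨⟨⟨n, by simpa using h1⟩, fun k => ⟨y k, h2 k⟩⟩, h0, hF, h1⟩
  · funext k
    have h1 := (hf y hy).2.2.2 k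
    have h2 := (hf y' hy').2.2.2 k
    rw [h] at h1
    exact_mod_cast h1.symm.trans h2
  · rintro x ⟨⟨-, hx⟩, h0, hF, h1⟩
    choose y hy using hx
    have hyF : y ∈ latticePoints w F n := ⟨x, h0, hF, h1, hy⟩
    refine ⟨y, hyF, hw.eq ((hf y hyF).2.2.1.trans h1.symm) fun k => ?_⟩
    rw [(hf y hyF).2.2.2 k, hy k]

theorem ncard_latticePoints {w : ι → Fin d → ℤ} (hw : IsAffIndep w) (F : Set ι) (n : ℕ) :
    (latticePoints w F n).ncard = (coneSlice (paramLattice w) F n).ncard := by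
  obtain ⟨f, hf⟩ := exists_bijOn_coneSlice hw F n
  rw [← hf.image_eq, hf.injOn.ncard_image]

theorem IsAffIndep.isConeLattice {w : ι → Fin d → ℤ} (hw : IsAffIndep w) :
    IsConeLattice (paramLattice w) where
  int_mem z := ⟨⟨∑ i, z i, by push_cast; rfl⟩, fun k => ⟨∑ i, z i * w i k, by push_cast; rfl⟩⟩
  sum_int _ hx := hx.1
  finite n := by
    obtain ⟨f, hf⟩ := exists_bijOn_coneSlice hw ∅ n
    exact hf.image_eq ▸ (latticePoints_finite w ∅ n).image f

theorem setOf_mem_smul_hull [Nonempty ι] (w : ι → Fin d → ℤ) (n : ℕ) :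
    {x : Fin d → ℤ | (fun i => (x i : ℝ)) ∈ (n : ℝ) • hull w} = latticePoints w ∅ n := by
  ext y
  simp only [Set.mem_ofPred_eq, mem_smul_hull, latticePoints, Set.mem_empty_iff_false,
    false_imp_iff, implies_true, true_and]

theorem ehr_hull [Nonempty ι] (w : ι → Fin d → ℤ) (n : ℕ) :
    ehr (hull w) n = (latticePoints w ∅ n).ncard := by
  rw [ehr, setOf_mem_smul_hull]

theorem deltaVec_hull {w : ι → Fin d → ℤ} (hw : IsAffIndep w) (hd : Fintype.card ι = d + 1)
    (i : ℕ) : deltaVec (hull w) d i = (boxSlice (paramLattice w) ∅ i).ncard := by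
  have : Nonempty ι := Fintype.card_pos_iff.1 (by omega)
  rw [← deltaOp_coneSlice hw.isConeLattice ∅ hd i, deltaVec, deltaOp]
  simp only [ehr_hull, ncard_latticePoints hw]

theorem isSmallShape_of_simplex {w : ι → Fin d → ℤ} (hw : IsAffIndep w)
    (hd : Fintype.card ι = d + 1) {δv : ℕ → ℕ} (hzero : ∀ i, d < i → δv i = 0)
    (hsum : ∑ i ∈ Finset.range (d + 1), δv i ≤ 3)
    (hδ : ∀ i ≤ d, deltaVec (hull w) d i = δv i) : IsSmallShape d δv :=
  isSmallShape_of_boxSlice hw.isConeLattice hd hzero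
    (fun i hi => by exact_mod_cast (deltaVec_hull hw hd i).symm.trans (hδ i hi)) hsum

end ParamLattice

section Flip

variable {d : ℕ} {ι : Type*}

theorem halfOpen_exists_int (F : Prop) (a : ℝ) :
    ∃ m : ℤ, (F → 0 < a - m ∧ a - m ≤ 1) ∧ (¬ F → 0 ≤ a - m ∧ a - m < 1) := by
  by_cases h : F
  · refine ⟨⌈a⌉ - 1, fun _ => ?_, fun h' => (h' h).elim⟩
    have h2 := Int.ceil_lt_add_one a
    have h3 := Int.le_ceil a
    push_cast
    constructor <;> linarith
  · refine ⟨⌊a⌋, fun h' => (h h').elim, fun _ => ?_⟩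
    have h2 := Int.floor_le a
    have h3 := Int.lt_floor_add_one a
    constructor <;> linarith

theorem ncard_halfOpenBox_eq_one_iff [Fintype ι] {Λ : AddSubgroup (ι → ℝ)} (hΛ : IsConeLattice Λ)
    (F : Set ι) : (halfOpenBox Λ F).ncard = 1 ↔ ∀ x ∈ Λ, ∀ i, ∃ z : ℤ, x i = z := by
  classical
  have h1 : (fun i => if i ∈ F then (1 : ℝ) else 0) ∈ halfOpenBox Λ F := by
    refine ⟨?_, fun i => ⟨fun h => by simp [h], fun h => by simp [h]⟩⟩
    convert! hΛ.int_mem fun i => if i ∈ F then 1 else 0 with i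
    push_cast
    rfl
  constructor
  · intro h x hx i
    choose m hm using fun i => halfOpen_exists_int (i ∈ F) (x i)
    have h2 : (fun i => x i - m i) ∈ halfOpenBox Λ F := ⟨Λ.sub_mem hx (hΛ.int_mem m), hm⟩
    obtain ⟨a, ha⟩ := Set.ncard_eq_one.1 h
    rw [ha, Set.mem_singleton_iff] at h1 h2
    have h3 := congrFun (h2.trans h1.symm) i
    refine ⟨m i + if i ∈ F then 1 else 0, ?_⟩
    push_cast
    linarith
  · intro h
    refine Set.ncard_eq_one.2 ⟨_, Set.eq_singleton_iff_unique_mem.2 ⟨h1, fun x hx => ?_⟩⟩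
    funext i
    obtain ⟨z, hz⟩ := h x hx.1 i
    have h2 := hx.2 i
    rw [hz] at h2 ⊢
    by_cases hi : i ∈ F
    · have h3 : 0 < z ∧ z ≤ 1 := by exact_mod_cast h2.1 hi
      obtain rfl : z = 1 := by omega
      simp [hi]
    · have h3 : 0 ≤ z ∧ z < 1 := by exact_mod_cast h2.2 hi
      obtain rfl : z = 0 := by omega
      simp [hi]

variable [DecidableEq ι]

/-- The weights of the relation `w i₀ + b = w i₁ + w i₂` with the coefficient of `b` dropped,
written so that they sum to zero. -/
def flipVec (i₀ i₁ i₂ : ι) : ι → ℝ :=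
  Pi.single i₁ 1 + Pi.single i₂ 1 - 2 • Pi.single i₀ 1

/-- The change of weights when `w i₀` is replaced by `w i₁ + w i₂ - w i₀`. -/
def flipWeights (i₀ i₁ i₂ : ι) (x : ι → ℝ) : ι → ℝ := x + x i₀ • flipVec i₀ i₁ i₂

theorem flipVec_apply_zero {i₀ i₁ i₂ : ι} (h1 : i₀ ≠ i₁) (h2 : i₀ ≠ i₂) :
    flipVec i₀ i₁ i₂ i₀ = -2 := by
  simp [flipVec, h1, h2]

theorem flipWeights_apply_zero {i₀ i₁ i₂ : ι} (h1 : i₀ ≠ i₁) (h2 : i₀ ≠ i₂) (x : ι → ℝ) :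
    flipWeights i₀ i₁ i₂ x i₀ = -x i₀ := by
  simp [flipWeights, flipVec_apply_zero h1 h2]; ring

theorem flipWeights_apply_of_ne {i₀ i₁ i₂ i : ι} (h : i₀ ≠ i) (x : ι → ℝ) :
    flipWeights i₀ i₁ i₂ x i = x i + x i₀ * ((if i = i₁ then 1 else 0) + if i = i₂ then 1 else 0) := by
  simp [flipWeights, flipVec, h.symm, Pi.single_apply]

theorem flipWeights_flipWeights {i₀ i₁ i₂ : ι} (h1 : i₀ ≠ i₁) (h2 : i₀ ≠ i₂) (x : ι → ℝ) :
    flipWeights i₀ i₁ i₂ (flipWeights i₀ i₁ i₂ x) = x := by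
  rw [flipWeights, flipWeights_apply_zero h1 h2, flipWeights]
  simp

theorem integral_flipWeights {i₀ i₁ i₂ : ι} {x : ι → ℝ} (hx : ∀ i, ∃ z : ℤ, x i = z) (i : ι) :
    ∃ z : ℤ, flipWeights i₀ i₁ i₂ x i = z := by
  choose z hz using hx
  refine ⟨z i + z i₀ * ((Pi.single i₁ 1 + Pi.single i₂ 1 - 2 • Pi.single i₀ 1 : ι → ℤ) i), ?_⟩
  simp [flipWeights, flipVec, hz, Pi.single_apply]

/-- The family `w` with `w i₀` replaced by `w i₁ + w i₂ - w i₀`. -/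
def flipPoints (i₀ i₁ i₂ : ι) (w : ι → Fin d → ℤ) : ι → Fin d → ℤ :=
  Function.update w i₀ (w i₁ + w i₂ - w i₀)

variable [Fintype ι]

theorem sum_flipVec (i₀ i₁ i₂ : ι) : ∑ i, flipVec i₀ i₁ i₂ i = 0 := by
  simp [flipVec, Finset.sum_add_distrib, ← Finset.mul_sum]
  norm_num

theorem sum_flipWeights (i₀ i₁ i₂ : ι) (x : ι → ℝ) : ∑ i, flipWeights i₀ i₁ i₂ x i = ∑ i, x i := by
  simp [flipWeights, Finset.sum_add_distrib, ← Finset.mul_sum, sum_flipVec]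

theorem sum_flipVec_mul (i₀ i₁ i₂ : ι) (w : ι → Fin d → ℤ) (k : Fin d) :
    ∑ i, flipVec i₀ i₁ i₂ i * w i k = w i₁ k + w i₂ k - 2 * w i₀ k := by
  simp [flipVec, Finset.sum_add_distrib, add_mul, sub_mul, Pi.single_apply]

theorem sum_flipWeights_mul (i₀ i₁ i₂ : ι) (w : ι → Fin d → ℤ) (x : ι → ℝ) (k : Fin d) :
    ∑ i, flipWeights i₀ i₁ i₂ x i * w i k = ∑ i, x i * flipPoints i₀ i₁ i₂ w i k := by
  have h1 : ∑ i, flipWeights i₀ i₁ i₂ x i * w i k =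
      ∑ i, x i * w i k + x i₀ * (w i₁ k + w i₂ k - 2 * w i₀ k) := by
    rw [← sum_flipVec_mul, Finset.mul_sum, ← Finset.sum_add_distrib]
    refine Finset.sum_congr rfl fun i _ => ?_
    simp [flipWeights]
    ring
  have h2 : ∀ i, x i * (flipPoints i₀ i₁ i₂ w i k : ℝ) = x i * w i k +
      if i = i₀ then x i₀ * (w i₁ k + w i₂ k - 2 * w i₀ k) else 0 := by
    intro i
    by_cases h : i = i₀
    · subst h
      simp [flipPoints]
      ring
    · simp [flipPoints, h]
  rw [h1, Finset.sum_congr rfl fun i _ => h2 i, Finset.sum_add_distrib]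
  simp

theorem mem_paramLattice_flipPoints {i₀ i₁ i₂ : ι} {w : ι → Fin d → ℤ} {x : ι → ℝ} :
    x ∈ paramLattice (flipPoints i₀ i₁ i₂ w) ↔ flipWeights i₀ i₁ i₂ x ∈ paramLattice w := by
  simp only [mem_paramLattice, sum_flipWeights, sum_flipWeights_mul]

theorem IsAffIndep.flipPoints {i₀ i₁ i₂ : ι} (h1 : i₀ ≠ i₁) (h2 : i₀ ≠ i₂)
    {w : ι → Fin d → ℤ} (hw : IsAffIndep w) : IsAffIndep (flipPoints i₀ i₁ i₂ w) := by
  intro x hx hx'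
  have h := hw (flipWeights i₀ i₁ i₂ x) (by rw [sum_flipWeights, hx]) fun k => by rw [sum_flipWeights_mul, hx']
  rw [← flipWeights_flipWeights h1 h2 x, h]
  simp [flipWeights]

theorem latticePoints_hull_flip {i₀ i₁ i₂ : ι} (h1 : i₀ ≠ i₁) (h2 : i₀ ≠ i₂)
    (w : ι → Fin d → ℤ) (n : ℕ) :
    latticePoints (fun o : Option ι => o.elim (w i₁ + w i₂ - w i₀) w) ∅ n =
      latticePoints w ∅ n ∪ latticePoints (flipPoints i₀ i₁ i₂ w) {i₀} n := by
  ext y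
  constructor
  · rintro ⟨x, hx0, -, hx1, hx⟩
    rw [Fintype.sum_option] at hx1
    simp only [Fintype.sum_option, Option.elim] at hx
    set t := x none with ht
    set u : ι → ℝ := fun i => x (some i) with hu
    have ht0 : 0 ≤ t := hx0 none
    have hu0 : ∀ i, 0 ≤ u i := fun i => hx0 (some i)
    have hv1 : ∑ i, (u + t • flipVec i₀ i₁ i₂ + t • Pi.single i₀ 1 : ι → ℝ) i = n := by
      simp only [Pi.add_apply, Pi.smul_apply, smul_eq_mul, Finset.sum_add_distrib,
        ← Finset.mul_sum, sum_flipVec, Finset.sum_pi_single', Finset.mem_univ, if_true]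
      rw [← hx1]
      ring
    have hv : ∀ k, ∑ i, (u + t • flipVec i₀ i₁ i₂ + t • Pi.single i₀ 1 : ι → ℝ) i * w i k = y k := by
      intro k
      simp only [Pi.add_apply, Pi.smul_apply, smul_eq_mul, add_mul, Finset.sum_add_distrib,
        mul_assoc, ← Finset.mul_sum, sum_flipVec_mul]
      rw [← hx k]
      simp [Pi.single_apply]
      ring
    set v : ι → ℝ := u + t • flipVec i₀ i₁ i₂ + t • Pi.single i₀ 1 with hvdef
    have hv0 : v i₀ = u i₀ - t := by
      simp [hvdef, flipVec_apply_zero h1 h2]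
      ring
    have hvi : ∀ i, i₀ ≠ i →
        v i = u i + t * ((if i = i₁ then 1 else 0) + if i = i₂ then 1 else 0) := by
      intro i hi
      simp [hvdef, flipVec, hi.symm, Pi.single_apply]
    by_cases hc : t ≤ u i₀
    · left
      refine ⟨v, fun i => ?_, fun _ h => h.elim, hv1, hv⟩
      by_cases hi : i₀ = i
      · subst hi
        rw [hv0]
        linarith
      · rw [hvi i hi]
        have := hu0 i
        positivity
    · right
      refine ⟨flipWeights i₀ i₁ i₂ v, fun i => ?_, fun i hi => ?_, by rw [sum_flipWeights, hv1], fun k => ?_⟩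
      · by_cases hi : i₀ = i
        · subst hi
          rw [flipWeights_apply_zero h1 h2, hv0]
          linarith
        · rw [flipWeights_apply_of_ne hi, hvi i hi, hv0, add_assoc, ← add_mul]
          have := hu0 i
          have := hu0 i₀
          rw [show t + (u i₀ - t) = u i₀ by ring]
          positivity
      · obtain rfl := Set.mem_singleton_iff.1 hi
        rw [flipWeights_apply_zero h1 h2, hv0]
        linarith
      · rw [← sum_flipWeights_mul, flipWeights_flipWeights h1 h2, hv]
  · rintro (⟨x, hx0, -, hx1, hx⟩ | ⟨x, hx0, -, hx1, hx⟩)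
    · refine ⟨fun o => o.elim 0 x, fun o => ?_, fun _ h => h.elim, ?_, fun k => ?_⟩
      · cases o
        · exact le_rfl
        · exact hx0 _
      · simpa [Fintype.sum_option] using hx1
      · simpa [Fintype.sum_option] using hx k
    · refine ⟨fun o => o.elim (x i₀) (Function.update x i₀ 0), fun o => ?_, fun _ h => h.elim, ?_,
        fun k => ?_⟩
      · cases o with
        | none => exact hx0 _
        | some i =>
          by_cases hi : i = i₀
          · subst hi; simp
          · simpa [hi] using hx0 i
      · rw [Fintype.sum_option, ← hx1, ← Finset.add_sum_erase _ _ (Finset.mem_univ i₀),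
          ← Finset.add_sum_erase _ x (Finset.mem_univ i₀)]
        simp only [Option.elim, Function.update_self, zero_add]
        congr 1
        exact Finset.sum_congr rfl fun i hi => by simp [Finset.ne_of_mem_erase hi]
      · rw [Fintype.sum_option, ← hx k, ← Finset.add_sum_erase _ _ (Finset.mem_univ i₀),
          ← Finset.add_sum_erase _ (fun i => x i * _) (Finset.mem_univ i₀)]
        simp only [Option.elim, Function.update_self, zero_add, zero_mul, _root_.flipPoints]
        congr 1
        exact Finset.sum_congr rfl fun i hi => by simp [Finset.ne_of_mem_erase hi]

theorem disjoint_latticePoints_flip {i₀ i₁ i₂ : ι} (h1 : i₀ ≠ i₁) (h2 : i₀ ≠ i₂)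
    {w : ι → Fin d → ℤ} (hw : IsAffIndep w) (n : ℕ) :
    Disjoint (latticePoints w ∅ n) (latticePoints (flipPoints i₀ i₁ i₂ w) {i₀} n) := by
  rw [Set.disjoint_left]
  rintro y ⟨x, hx0, -, hx1, hx⟩ ⟨z, -, hz0, hz1, hz⟩
  have h : x = flipWeights i₀ i₁ i₂ z :=
    hw.eq (by rw [sum_flipWeights, hx1, hz1]) fun k => by rw [sum_flipWeights_mul, hx, hz]
  have h3 := hx0 i₀
  rw [h, flipWeights_apply_zero h1 h2] at h3
  have := hz0 i₀ rfl
  linarith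

theorem sum_deltaVec_flip_ne_three {i₀ i₁ i₂ : ι} (h1 : i₀ ≠ i₁) (h2 : i₀ ≠ i₂)
    {w : ι → Fin d → ℤ} (hw : IsAffIndep w) (hd : Fintype.card ι = d + 1) :
    ∑ i ∈ Finset.range (d + 1),
      deltaVec (hull fun o : Option ι => o.elim (w i₁ + w i₂ - w i₀) w) d i ≠ 3 := by
  have hw' := hw.flipPoints h1 h2
  have hΛ := hw.isConeLattice
  have hΛ' := hw'.isConeLattice
  have key : ∀ i, deltaVec (hull fun o : Option ι => o.elim (w i₁ + w i₂ - w i₀) w) d i =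
      (boxSlice (paramLattice w) ∅ i).ncard +
        (boxSlice (paramLattice (flipPoints i₀ i₁ i₂ w)) {i₀} i).ncard := by
    intro i
    rw [← deltaOp_coneSlice hΛ ∅ hd i, ← deltaOp_coneSlice hΛ' {i₀} hd i, deltaVec, deltaOp,
      deltaOp, ← Finset.sum_add_distrib]
    refine Finset.sum_congr rfl fun j _ => ?_
    rw [ehr_hull, latticePoints_hull_flip h1 h2, Set.ncard_union_eq
      (disjoint_latticePoints_flip h1 h2 hw j) (latticePoints_finite _ _ _)
      (latticePoints_finite _ _ _), ncard_latticePoints hw, ncard_latticePoints hw']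
    push_cast
    ring
  obtain ⟨hf, hc⟩ := halfOpenBox_finite_ncard hΛ (F := ∅) hd ⟨i₀, id⟩
  obtain ⟨hf', hc'⟩ := halfOpenBox_finite_ncard hΛ' (F := {i₀}) hd ⟨i₁, fun h => h1 h.symm⟩
  have hiff : (halfOpenBox (paramLattice w) ∅).ncard = 1 ↔
      (halfOpenBox (paramLattice (flipPoints i₀ i₁ i₂ w)) {i₀}).ncard = 1 := by
    rw [ncard_halfOpenBox_eq_one_iff hΛ, ncard_halfOpenBox_eq_one_iff hΛ']
    constructor
    · intro h x hx i
      rw [← flipWeights_flipWeights h1 h2 x]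
      exact integral_flipWeights (h _ (mem_paramLattice_flipPoints.1 hx)) i
    · intro h x hx i
      rw [← flipWeights_flipWeights h1 h2 x] at hx ⊢
      exact integral_flipWeights (h _ (mem_paramLattice_flipPoints.2 hx)) i
  have hpos : 0 < (halfOpenBox (paramLattice w) ∅).ncard :=
    (Set.ncard_pos hf).2 ⟨0, zero_mem_halfOpenBox _⟩
  have hpos' : 0 < (halfOpenBox (paramLattice (flipPoints i₀ i₁ i₂ w)) {i₀}).ncard := by
    refine (Set.ncard_pos hf').2 ⟨fun i => ((Pi.single i₀ 1 : ι → ℤ) i : ℝ),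
      hΛ'.int_mem _, fun i => ⟨fun h => ?_, fun h => ?_⟩⟩
    · obtain rfl := Set.mem_singleton_iff.1 h
      simp
    · have : i ≠ i₀ := h
      simp [this]
  simp only [key, Finset.sum_add_distrib]
  norm_cast
  rw [← hc, ← hc']
  omega

end Flip

section LatticePolytope

variable {d : ℕ}

theorem hull_val (A : Finset (Fin d → ℤ)) : hull (Subtype.val : A → Fin d → ℤ) =
    convexHull ℝ ((fun v i => (v i : ℝ)) '' (A : Set (Fin d → ℤ))) := by
  rw [hull]
  congr 1
  ext y
  simp

theorem convex_hull {ι : Type*} (w : ι → Fin d → ℤ) : Convex ℝ (hull w) :=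
  convex_convexHull ℝ _

theorem mem_hull_of_mem {A : Finset (Fin d → ℤ)} {a : Fin d → ℤ} (ha : a ∈ A) :
    (fun k => (a k : ℝ)) ∈ hull (Subtype.val : A → Fin d → ℤ) :=
  subset_convexHull ℝ _ ⟨⟨a, ha⟩, rfl⟩

theorem vectorSpan_hull {ι : Type*} (w : ι → Fin d → ℤ) :
    vectorSpan ℝ (hull w) = vectorSpan ℝ (Set.range fun i (k : Fin d) => (w i k : ℝ)) := by
  rw [← direction_affineSpan, hull, affineSpan_convexHull, direction_affineSpan]

theorem isAffIndep_of_finrank {ι : Type*} [Fintype ι] {w : ι → Fin d → ℤ}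
    (hd : Fintype.card ι = d + 1) (h : Module.finrank ℝ (vectorSpan ℝ (hull w)) = d) :
    IsAffIndep w := by
  rw [isAffIndep_iff, affineIndependent_iff_finrank_vectorSpan_eq ℝ _ hd, ← vectorSpan_hull, h]

theorem isSmallShape_of_card_eq {A : Finset (Fin d → ℤ)} (hA : A.card = d + 1)
    (h : Module.finrank ℝ (vectorSpan ℝ (hull (Subtype.val : A → Fin d → ℤ))) = d)
    {δv : ℕ → ℕ} (hzero : ∀ i, d < i → δv i = 0) (hsum : ∑ i ∈ Finset.range (d + 1), δv i ≤ 3)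
    (hδ : ∀ i ≤ d, deltaVec (hull (Subtype.val : A → Fin d → ℤ)) d i = δv i) :
    IsSmallShape d δv :=
  have hc : Fintype.card A = d + 1 := by rw [Fintype.card_coe, hA]
  isSmallShape_of_simplex (isAffIndep_of_finrank hc h) hc hzero hsum hδ

theorem hull_erase {A : Finset (Fin d → ℤ)} {a : Fin d → ℤ}
    (ha : (fun k => (a k : ℝ)) ∈ hull (Subtype.val : ↥(A.erase a) → Fin d → ℤ)) :
    hull (Subtype.val : ↥(A.erase a) → Fin d → ℤ) =
      hull (Subtype.val : A → Fin d → ℤ) := by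
  refine Set.Subset.antisymm (convexHull_min ?_ (convex_convexHull ℝ _))
    (convexHull_min ?_ (convex_convexHull ℝ _))
  · rintro _ ⟨⟨x, hx⟩, rfl⟩
    exact mem_hull_of_mem (Finset.mem_of_mem_erase hx)
  · rintro _ ⟨⟨x, hx⟩, rfl⟩
    by_cases h : x = a
    · subst h
      exact ha
    · exact mem_hull_of_mem (Finset.mem_erase.2 ⟨h, hx⟩)

theorem hull_erase_of_two_mul_eq {A : Finset (Fin d → ℤ)} {a c e : Fin d → ℤ} (hc : c ∈ A)
    (he : e ∈ A) (hca : c ≠ a) (hea : e ≠ a) (h : a + a = c + e) :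
    hull (Subtype.val : ↥(A.erase a) → Fin d → ℤ) =
      hull (Subtype.val : A → Fin d → ℤ) := by
  refine hull_erase ?_
  have h1 := convex_hull _ (mem_hull_of_mem (Finset.mem_erase.2 ⟨hca, hc⟩))
    (mem_hull_of_mem (Finset.mem_erase.2 ⟨hea, he⟩)) (a := (1 / 2 : ℝ)) (b := 1 / 2)
    (by norm_num) (by norm_num) (by norm_num)
  convert h1 using 1
  funext k
  have h2 : (a k : ℝ) + a k = c k + e k := by exact_mod_cast congrFun h k
  simp only [Pi.add_apply, Pi.smul_apply, smul_eq_mul]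
  linarith

theorem vectorSpan_hull_erase {A : Finset (Fin d → ℤ)} {a b c e : Fin d → ℤ} (ha : a ∈ A)
    (hb : b ∈ A) (hc : c ∈ A) (he : e ∈ A) (hab : a ≠ b) (hcb : c ≠ b) (heb : e ≠ b)
    (h : b = c + e - a) :
    vectorSpan ℝ (hull (Subtype.val : ↥(A.erase b) → Fin d → ℤ)) =
      vectorSpan ℝ (hull (Subtype.val : A → Fin d → ℤ)) := by
  set B := A.erase b with hB
  have hmem : ∀ x ∈ A, x ≠ b → (fun k => (x k : ℝ)) ∈
      affineSpan ℝ ((fun v i => (v i : ℝ)) '' (B : Set (Fin d → ℤ))) := fun x hx hxb =>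
    subset_affineSpan ℝ _ ⟨x, Finset.mem_erase.2 ⟨hxb, hx⟩, rfl⟩
  have hspan : (fun k => (b k : ℝ)) ∈
      affineSpan ℝ ((fun v i => (v i : ℝ)) '' (B : Set (Fin d → ℤ))) := by
    have h1 := AffineSubspace.smul_vsub_vadd_mem _ (1 : ℝ) (hmem c hc hcb) (hmem a ha hab)
      (hmem e he heb)
    convert h1 using 1
    funext k
    simp [h]
    ring
  have himage : insert (fun k => (b k : ℝ)) ((fun v i => (v i : ℝ)) '' (B : Set (Fin d → ℤ))) =
      (fun v i => (v i : ℝ)) '' (A : Set (Fin d → ℤ)) := by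
    rw [← Finset.insert_erase hb, Finset.coe_insert, Set.image_insert_eq]
  rw [← direction_affineSpan, ← direction_affineSpan, hull_val, hull_val, affineSpan_convexHull,
    affineSpan_convexHull, ← affineSpan_insert_eq_affineSpan ℝ hspan, himage]

theorem hull_option_elim {A : Finset (Fin d → ℤ)} {b : Fin d → ℤ} (hb : b ∈ A) :
    hull (fun o : Option ↥(A.erase b) => o.elim b Subtype.val) =
      hull (Subtype.val : A → Fin d → ℤ) := by
  rw [hull_val, hull]
  congr 1
  ext y
  constructor
  · rintro ⟨o | x, rfl⟩
    · exact ⟨b, hb, rfl⟩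
    · exact ⟨x, Finset.mem_of_mem_erase x.2, rfl⟩
  · rintro ⟨x, hx, rfl⟩
    by_cases h : x = b
    · exact ⟨none, by simp [h]⟩
    · exact ⟨some ⟨x, Finset.mem_erase.2 ⟨h, hx⟩⟩, rfl⟩

theorem sum_deltaVec_ne_three_of_add_eq {A : Finset (Fin d → ℤ)} (hA : A.card = d + 2)
    (hdim : Module.finrank ℝ (vectorSpan ℝ (hull (Subtype.val : A → Fin d → ℤ))) = d)
    {a b c e : Fin d → ℤ} (ha : a ∈ A) (hb : b ∈ A) (hc : c ∈ A) (he : e ∈ A) (hab : a ≠ b)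
    (hac : a ≠ c) (hae : a ≠ e) (hbc : b ≠ c) (hbe : b ≠ e) (h : a + b = c + e) :
    ∑ i ∈ Finset.range (d + 1), deltaVec (hull (Subtype.val : A → Fin d → ℤ)) d i ≠ 3 := by
  have hb' : b = c + e - a := by rw [← h]; abel
  have hcard : Fintype.card ↥(A.erase b) = d + 1 := by
    rw [Fintype.card_coe, Finset.card_erase_of_mem hb, hA]
    rfl
  have hw : IsAffIndep (Subtype.val : ↥(A.erase b) → Fin d → ℤ) :=
    isAffIndep_of_finrank hcard
      (by rw [vectorSpan_hull_erase ha hb hc he hab hbc.symm hbe.symm hb', hdim])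
  have h1 := sum_deltaVec_flip_ne_three
    (i₀ := ⟨a, Finset.mem_erase.2 ⟨hab, ha⟩⟩) (i₁ := ⟨c, Finset.mem_erase.2 ⟨hbc.symm, hc⟩⟩)
    (i₂ := ⟨e, Finset.mem_erase.2 ⟨hbe.symm, he⟩⟩) (by simpa using hac) (by simpa using hae) hw hcard
  simp only [← hb', hull_option_elim hb] at h1
  exact h1

theorem ehr_zero {P : Set (Fin d → ℝ)} (hP : P.Nonempty) : ehr P 0 = 1 := by
  rw [ehr, Nat.cast_zero, Set.zero_smul_set hP, Set.ncard_eq_one]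
  refine ⟨0, ?_⟩
  ext x
  simp [funext_iff]

theorem deltaVec_one {P : Set (Fin d → ℝ)} (hP : P.Nonempty) :
    deltaVec P d 1 = ehr P 1 - (d + 1) := by
  simp [deltaVec, Finset.sum_range_succ, ehr_zero hP]
  ring

theorem deltaVec_two {P : Set (Fin d → ℝ)} (hP : P.Nonempty) :
    deltaVec P d 2 = ehr P 2 - (d + 1) * ehr P 1 + (d + 1).choose 2 := by
  simp [deltaVec, Finset.sum_range_succ, ehr_zero hP]
  ring

theorem IsIntegralPolytope.exists_finset {P : Set (Fin d → ℝ)} {n : ℕ}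
    (hP : IsIntegralPolytope P n) : ∃ A : Finset (Fin d → ℤ), A.Nonempty ∧
      P = hull (Subtype.val : A → Fin d → ℤ) ∧ ehr P 1 = A.card := by
  obtain ⟨V, hV, hPV, -⟩ := hP
  have := hV.to_subtype
  rw [← hull_val] at hPV
  have hfin := latticePoints_finite (Subtype.val : V → Fin d → ℤ) ∅ 1
  have hmem : ∀ x, x ∈ hfin.toFinset ↔ (fun k => (x k : ℝ)) ∈ P := by
    intro x
    rw [hfin.mem_toFinset, hPV, ← setOf_mem_smul_hull, Set.mem_ofPred_eq, Nat.cast_one, one_smul]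
  have hsub : V ⊆ hfin.toFinset := fun x hx => (hmem x).2 (hPV ▸ mem_hull_of_mem hx)
  refine ⟨hfin.toFinset, hV.mono hsub, Set.Subset.antisymm ?_ ?_, ?_⟩
  · rw [hPV, hull_val, hull_val]
    exact convexHull_mono (Set.image_mono (Finset.coe_subset.2 hsub))
  · refine convexHull_min ?_ (hPV ▸ convex_convexHull ℝ _)
    rintro _ ⟨⟨x, hx⟩, rfl⟩
    exact (hmem x).1 hx
  · rw [← Set.ncard_eq_toFinset_card _ hfin, hPV, ehr_hull]

/-- When the second dilation has too few lattice points, two pairs of points have equal sums. -/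
theorem exists_add_eq_add {A : Finset (Fin d → ℤ)} (hA : A.Nonempty)
    (h : ehr (hull (Subtype.val : A → Fin d → ℤ)) 2 < (A.card + 1).choose 2) :
    ∃ a ∈ A, ∃ b ∈ A, ∃ c ∈ A, ∃ e ∈ A, s(a, b) ≠ s(c, e) ∧ a + b = c + e := by
  have := hA.to_subtype
  have hfin := latticePoints_finite (Subtype.val : A → Fin d → ℤ) ∅ 2
  rw [ehr_hull, Set.ncard_eq_toFinset_card _ hfin, ← Finset.card_sym2] at h
  let f : Sym2 (Fin d → ℤ) → Fin d → ℤ := Sym2.lift ⟨fun x y => x + y, add_comm⟩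
  obtain ⟨p, hp, q, hq, hpq, hf⟩ := Finset.exists_ne_map_eq_of_card_lt_of_maps_to (f := f) h (by
    intro p hp
    induction p with | _ x y => ?_
    obtain ⟨hx, hy⟩ := Finset.mk_mem_sym2_iff.1 hp
    rw [Finset.mem_coe, hfin.mem_toFinset, ← setOf_mem_smul_hull, Set.mem_ofPred_eq]
    have h1 := convex_hull _ (mem_hull_of_mem hx) (mem_hull_of_mem hy)
      (a := (1 / 2 : ℝ)) (b := 1 / 2) (by norm_num) (by norm_num) (by norm_num)
    refine ⟨_, h1, ?_⟩
    funext k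
    simp [f]
    ring)
  induction p with | _ a b => ?_
  induction q with | _ c e => ?_
  obtain ⟨ha, hb⟩ := Finset.mk_mem_sym2_iff.1 hp
  obtain ⟨hc, he⟩ := Finset.mk_mem_sym2_iff.1 hq
  exact ⟨a, ha, b, hb, c, hc, e, he, hpq, hf⟩

theorem IsIntegralPolytope.isSmallShape {P : Set (Fin d → ℝ)} (hP : IsIntegralPolytope P d)
    (hd : 3 ≤ d) {δv : ℕ → ℕ} (h0 : δv 0 = 1) (hzero : ∀ i, d < i → δv i = 0)
    (hsum : ∑ i ∈ Finset.range (d + 1), δv i ≤ 3)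
    (hδ : ∀ i ≤ d, deltaVec P d i = δv i) : IsSmallShape d δv := by
  obtain ⟨A, hA, rfl, hA1⟩ := hP.exists_finset
  obtain ⟨-, -, -, hdim⟩ := hP
  have hne : (hull (Subtype.val : A → Fin d → ℤ)).Nonempty :=
    hA.elim fun a ha => ⟨_, mem_hull_of_mem ha⟩
  have hδ1 : A.card = d + 1 + δv 1 := by
    have h1 := (deltaVec_one hne).symm.trans (hδ 1 (by omega))
    rw [hA1] at h1
    omega
  have simplex : δv 1 = 0 → IsSmallShape d δv := fun h1 =>
    isSmallShape_of_card_eq (by omega) hdim hzero hsum hδ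
  rcases exists_shape h0 hzero hsum with h | ⟨k, hk1, hkd, h⟩ | ⟨a, b, ha1, hab, hbd, h⟩
  · exact Or.inl h
  · rcases hk1.eq_or_lt with rfl | hk
    · exact Or.inr (Or.inl ⟨1, le_rfl, by omega, h⟩)
    · exact simplex (by rw [h, if_neg (by omega), if_neg (by omega)])
  · rcases ha1.eq_or_lt with rfl | ha
    · rcases le_or_gt b 2 with hb | hb
      · exact Or.inr (Or.inr ⟨1, b, le_rfl, hab, by omega, by omega, h⟩)
      · have h1 : δv 1 = 1 := by rw [h, if_neg (by omega), if_pos rfl, if_neg (by omega)]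
        have h2 : δv 2 = 0 := by
          rw [h, if_neg (by omega), if_neg (by omega), if_neg (by omega)]
        have hsum3 : ∑ i ∈ Finset.range (d + 1),
            deltaVec (hull (Subtype.val : A → Fin d → ℤ)) d i = 3 := by
          rw [Finset.sum_congr rfl fun i hi =>
            hδ i (Nat.lt_succ_iff.1 (Finset.mem_range.1 hi))]
          have hone : ∀ k, k ≤ d →
              ∑ j ∈ Finset.range (d + 1), (if j = k then 1 else 0) = 1 := by
            intro k hk
            rw [Finset.sum_ite_eq' (Finset.range (d + 1)) k,
              if_pos (Finset.mem_range.2 (by omega))]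
          have : ∑ i ∈ Finset.range (d + 1), δv i = 3 := by
            simp only [h, Finset.sum_add_distrib]
            rw [hone 0 (by omega), hone 1 (by omega), hone b hbd]
          exact_mod_cast this
        have hA2 : A.card = d + 2 := by omega
        have hehr : ehr (hull (Subtype.val : A → Fin d → ℤ)) 2 < (A.card + 1).choose 2 := by
          have h3 := (deltaVec_two hne).symm.trans (hδ 2 (by omega))
          rw [hA1, hA2, h2] at h3
          have h4 : (d + 3).choose 2 = (d + 1).choose 2 + (d + 1) + (d + 2) := by
            simp [Nat.choose_succ_succ']
            ring
          have h5 : (d + 2).choose 2 = (d + 1).choose 2 + (d + 1) := by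
            simp [Nat.choose_succ_succ']
            ring
          have h6 : 2 * (d + 2).choose 2 = (d + 2) * (d + 1) := by
            rw [Nat.choose_two_right]
            exact Nat.mul_div_cancel' ((Nat.even_mul_pred_self (d + 2)).two_dvd)
          rw [hA2, h4]
          push_cast at h3
          zify at h5 h6 ⊢
          nlinarith
        have erase : ∀ x y z, x ∈ A → y ∈ A → z ∈ A → y ≠ x → z ≠ x → x + x = y + z →
            IsSmallShape d δv := by
          intro x y z hx hy hz hyx hzx he
          have hh := hull_erase_of_two_mul_eq hy hz hyx hzx he
          refine isSmallShape_of_card_eq (A := A.erase x) ?_ (by rwa [hh]) hzero hsum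
            (by rwa [hh])
          rw [Finset.card_erase_of_mem hx, hA2]
          rfl
        obtain ⟨x, hx, y, hy, z, hz, t, ht, hne', he⟩ := exists_add_eq_add hA hehr
        have hxz : x ≠ z := by
          rintro rfl
          exact hne' (by rw [add_left_cancel he])
        have hxt : x ≠ t := by
          rintro rfl
          exact hne' (by rw [add_comm z x] at he; rw [add_left_cancel he, Sym2.eq_swap])
        have hyz : y ≠ z := by
          rintro rfl
          exact hne' (by rw [add_comm x y] at he; rw [add_left_cancel he, Sym2.eq_swap])
        have hyt : y ≠ t := by
          rintro rfl
          exact hne' (by rw [add_right_cancel he])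
        by_cases hxy : x = y
        · subst hxy
          exact erase x z t hx hz ht hxz.symm hxt.symm he
        by_cases hzt : z = t
        · subst hzt
          exact erase z x y hz hx hy hxz hyz he.symm
        exact (sum_deltaVec_ne_three_of_add_eq hA2 hdim hx hy hz ht hxy hxz hxt hyz hyt he
          hsum3).elim
    · exact simplex (by
        rw [h, if_neg (by omega), if_neg (by omega), if_neg (by omega)])

end LatticePolytope

section Construction

variable {d : ℕ}

/-- The vertices `-(c₁, …, c_d), e₁, …, e_d`. -/
def weightedSimplex (c : Fin (d + 1) → ℤ) : Fin (d + 1) → Fin d → ℤ :=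
  Fin.cons (fun k => -c k.succ) fun i => Pi.single i 1

theorem sum_mul_weightedSimplex (c : Fin (d + 1) → ℤ) (x : Fin (d + 1) → ℝ) (k : Fin d) :
    ∑ i, x i * weightedSimplex c i k = x k.succ - x 0 * c k.succ := by
  simp [Fin.sum_univ_succ, weightedSimplex, Pi.single_apply]
  ring

theorem sum_eq_of_succ {c : Fin (d + 1) → ℤ} (hc0 : c 0 = 1) (x : Fin (d + 1) → ℝ) :
    ∑ i, x i = x 0 * (∑ i, c i : ℤ) + ∑ k : Fin d, (x k.succ - x 0 * c k.succ) := by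
  simp [Fin.sum_univ_succ, hc0, mul_add, Finset.mul_sum]

theorem isAffIndep_weightedSimplex {c : Fin (d + 1) → ℤ} (hc0 : c 0 = 1) (hc : ∑ i, c i ≠ 0) :
    IsAffIndep (weightedSimplex c) := by
  intro x hx hx'
  simp only [sum_mul_weightedSimplex] at hx'
  rw [sum_eq_of_succ hc0, Finset.sum_congr rfl fun k _ => hx' k, Finset.sum_const_zero, add_zero,
    mul_eq_zero, Int.cast_eq_zero, or_iff_left hc] at hx
  funext i
  refine Fin.cases hx (fun k => ?_) i
  simpa [hx] using hx' k

theorem halfOpenBox_weightedSimplex {c r : Fin (d + 1) → ℤ} {m : ℕ} (hm : m ≠ 0) (hc0 : c 0 = 1)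
    (hcr : ∀ t, ∃ q : ℤ, c t = r t + m * q) (hc : ∑ t, c t = m) :
    halfOpenBox (paramLattice (weightedSimplex c)) ∅ =
      (fun (j : ℕ) t => Int.fract ((j : ℝ) * r t / m)) '' (Finset.range m : Set ℕ) := by
  have hm' : (m : ℝ) ≠ 0 := Nat.cast_ne_zero.2 hm
  have hmpos : (0 : ℝ) < m := by positivity
  choose q hq using hcr
  have hq' : ∀ t, (c t : ℝ) = r t + m * q t := fun t => by exact_mod_cast hq t
  ext x
  constructor
  · intro hx
    have hbox := mem_halfOpenBox_empty hx
    obtain ⟨⟨z, hz⟩, hxk⟩ := hx.1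
    simp only [sum_mul_weightedSimplex] at hxk
    choose y hy using hxk
    rw [sum_eq_of_succ hc0, Finset.sum_congr rfl fun k _ => hy k, hc] at hz
    have hj : ((z - ∑ k, y k : ℤ) : ℝ) = x 0 * m := by
      push_cast at hz ⊢
      linarith
    obtain ⟨j, hj'⟩ : ∃ j : ℕ, z - ∑ k, y k = j := by
      refine Int.eq_ofNat_of_zero_le ?_
      have : (0 : ℝ) ≤ ((z - ∑ k, y k : ℤ) : ℝ) := by
        rw [hj]
        exact mul_nonneg (hbox 0).1 hmpos.le
      exact_mod_cast this
    rw [hj', Int.cast_natCast] at hj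
    have hx0 : x 0 = j / m := by rw [hj, mul_div_cancel_right₀ _ hm']
    refine ⟨j, ?_, funext fun t => ?_⟩
    · rw [Finset.mem_coe, Finset.mem_range]
      have : (j : ℝ) < m := by
        rw [hj]
        nlinarith [(hbox 0).2]
      exact_mod_cast this
    · refine Int.fract_eq_iff.2 ⟨(hbox t).1, (hbox t).2, ?_⟩
      have h1 : ∃ p : ℤ, x t - x 0 * c t = p := by
        refine Fin.cases ⟨0, by simp [hc0]⟩ (fun k => ⟨y k, hy k⟩) t
      obtain ⟨p, hp⟩ := h1
      refine ⟨-p - j * q t, ?_⟩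
      push_cast
      rw [← hp, hx0, hq']
      field_simp
      ring
  · rintro ⟨j, -, rfl⟩
    refine ⟨?_, fun t => ⟨fun h => h.elim, fun _ => ⟨Int.fract_nonneg _, Int.fract_lt_one _⟩⟩⟩
    have h1 : (fun t => (j : ℝ) * c t / m) ∈ paramLattice (weightedSimplex c) := by
      refine ⟨⟨j, ?_⟩, fun k => ⟨0, ?_⟩⟩
      · rw [← Finset.sum_div, ← Finset.mul_sum, ← Int.cast_sum, hc]
        push_cast
        exact mul_div_cancel_right₀ _ hm'
      · rw [sum_mul_weightedSimplex, hc0]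
        push_cast
        ring
    have h2 := (paramLattice (weightedSimplex c)).sub_mem h1
      ((isAffIndep_weightedSimplex hc0 (by rw [hc]; exact_mod_cast hm)).isConeLattice.int_mem
        fun t => j * q t + ⌊(j : ℝ) * r t / m⌋)
    convert! h2 using 1
    funext t
    simp only [Pi.sub_apply, Int.fract, hq']
    push_cast
    field_simp
    ring

theorem boxSlice_weightedSimplex {c r : Fin (d + 1) → ℤ} {m : ℕ} (hm : m ≠ 0) (hc0 : c 0 = 1)
    (hr0 : r 0 = 1) (hcr : ∀ t, ∃ q : ℤ, c t = r t + m * q) (hc : ∑ t, c t = m) (i : ℕ) :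
    (boxSlice (paramLattice (weightedSimplex c)) ∅ i).ncard =
      ∑ j ∈ Finset.range m, if ∑ t, Int.fract ((j : ℝ) * r t / m) = i then 1 else 0 := by
  classical
  have hmpos : (0 : ℝ) < m := by positivity
  have h1 : boxSlice (paramLattice (weightedSimplex c)) ∅ i =
      (fun (j : ℕ) t => Int.fract ((j : ℝ) * r t / m)) ''
        ((Finset.range m).filter fun j : ℕ => ∑ t, Int.fract ((j : ℝ) * r t / m) = i : Finset ℕ) := by
    ext x
    rw [boxSlice, Set.mem_ofPred_eq, halfOpenBox_weightedSimplex hm hc0 hcr hc]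
    constructor
    · rintro ⟨⟨j, hj, rfl⟩, hx⟩
      exact ⟨j, Finset.mem_filter.2 ⟨hj, hx⟩, rfl⟩
    · rintro ⟨j, hj, rfl⟩
      obtain ⟨hj, hx⟩ := Finset.mem_filter.1 hj
      exact ⟨⟨j, hj, rfl⟩, hx⟩
  have hfr : ∀ j ∈ Finset.range m, Int.fract ((j : ℝ) * r 0 / m) = j / m := by
    intro j hj
    rw [hr0, Int.cast_one, mul_one, Int.fract_eq_self]
    refine ⟨by positivity, (div_lt_one hmpos).2 ?_⟩
    exact_mod_cast Finset.mem_range.1 hj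
  rw [h1, Set.InjOn.ncard_image, Set.ncard_coe_finset, Finset.card_filter]
  intro j hj j' hj' h
  have h2 := congrFun h 0
  simp only at h2
  rw [hfr j (Finset.mem_filter.1 hj).1, hfr j' (Finset.mem_filter.1 hj').1,
    div_left_inj' hmpos.ne'] at h2
  exact_mod_cast h2

theorem isIntegralPolytope_hull {w : Fin (d + 1) → Fin d → ℤ} (hw : IsAffIndep w) :
    IsIntegralPolytope (hull w) d := by
  classical
  refine ⟨Finset.univ.image w, Finset.univ_nonempty.image w, ?_, ?_⟩
  · rw [hull]
    congr 1
    ext y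
    simp
  · rw [vectorSpan_hull]
    exact ((isAffIndep_iff w).1 hw).finrank_vectorSpan (by simp)

theorem exists_polytope_of_residues {r : Fin (d + 1) → ℤ} {m : ℕ} {h : ℤ} (hd : d ≠ 0) (hm : m ≠ 0)
    (hr0 : r 0 = 1) (hr : ∑ t, r t = m * h) :
    ∃ P : Set (Fin d → ℝ), IsIntegralPolytope P d ∧ ∀ i, deltaVec P d i =
      ((∑ j ∈ Finset.range m, if ∑ t, Int.fract ((j : ℝ) * r t / m) = i then 1 else 0 : ℕ) : ℤ) := by
  have hlast : (0 : Fin (d + 1)) ≠ Fin.last d := fun e => hd (congrArg Fin.val e).symm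
  set c : Fin (d + 1) → ℤ := fun t => r t + m * (Pi.single (Fin.last d) (1 - h) : Fin (d + 1) → ℤ) t with hcdef
  have hc0 : c 0 = 1 := by simp [hcdef, hr0, hlast]
  have hc : ∑ t, c t = m := by
    simp only [hcdef, Finset.sum_add_distrib, ← Finset.mul_sum, hr, Finset.sum_pi_single',
      Finset.mem_univ, if_true]
    ring
  have hw := isAffIndep_weightedSimplex hc0 (by rw [hc]; exact_mod_cast hm)
  refine ⟨_, isIntegralPolytope_hull hw, fun i => ?_⟩
  rw [deltaVec_hull hw (by simp),
    boxSlice_weightedSimplex hm hc0 hr0 (fun t => ⟨_, rfl⟩) hc]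

theorem sum_fin_lt (n k : ℕ) (hk : k ≤ n) {M : Type*} [AddCommMonoidWithOne M] :
    ∑ t : Fin n, (if (t : ℕ) < k then (1 : M) else 0) = k := by
  rw [Fin.sum_univ_eq_sum_range (fun t => if t < k then (1 : M) else 0), Finset.sum_boole]
  congr 1
  rw [show (Finset.range n).filter (· < k) = Finset.range k by
    ext t; simp only [Finset.mem_filter, Finset.mem_range]; omega, Finset.card_range]

theorem IsSmallShape.exists_polytope {δv : ℕ → ℕ} (h : IsSmallShape d δv) (hd : d ≠ 0) :
    ∃ P : Set (Fin d → ℝ), IsIntegralPolytope P d ∧ ∀ i, deltaVec P d i = (δv i : ℤ) := by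
  rcases h with h | ⟨k, hk, hkd, h⟩ | ⟨a, b, ha, hab, hba, habd, h⟩
  · obtain ⟨P, hP, hδ⟩ := exists_polytope_of_residues (d := d) (m := 1) (h := 1)
      (r := Pi.single 0 1) hd one_ne_zero (by simp) (by simp)
    refine ⟨P, hP, fun i => ?_⟩
    rw [hδ, h, Finset.sum_range_one]
    simp [eq_comm]
  · obtain ⟨P, hP, hδ⟩ := exists_polytope_of_residues (d := d) (m := 2) (h := k)
      (r := fun t => if (t : ℕ) < 2 * k then 1 else 0) hd two_ne_zero
      (if_pos (by simp; omega)) (by rw [sum_fin_lt _ _ hkd]; push_cast; ring)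
    refine ⟨P, hP, fun i => ?_⟩
    have h1 : ∑ t : Fin (d + 1), Int.fract
        (((1 : ℕ) : ℝ) * (if (t : ℕ) < 2 * k then 1 else 0 : ℤ) / (2 : ℕ)) = k := by
      have : ∀ t : Fin (d + 1), Int.fract
          (((1 : ℕ) : ℝ) * (if (t : ℕ) < 2 * k then 1 else 0 : ℤ) / (2 : ℕ)) =
          1 / 2 * if (t : ℕ) < 2 * k then 1 else 0 := by
        intro t
        split_ifs
        · rw [Int.fract_eq_iff]
          exact ⟨by norm_num, by norm_num, 0, by norm_num⟩
        · simp
      rw [Finset.sum_congr rfl fun t _ => this t, ← Finset.mul_sum, sum_fin_lt _ _ hkd]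
      push_cast
      ring
    rw [hδ, h, Finset.sum_range_succ, Finset.sum_range_one, h1]
    simp [eq_comm]
  · have hsum : ∀ x y : ℝ, ∑ t : Fin (d + 1), ((x - y) * (if (t : ℕ) < 2 * b - a then 1 else 0) +
        y * if (t : ℕ) < a + b then 1 else 0) = (x - y) * (2 * b - a) + y * (a + b) := by
      intro x y
      rw [Finset.sum_add_distrib, ← Finset.mul_sum, ← Finset.mul_sum,
        sum_fin_lt _ _ (by omega), sum_fin_lt _ _ habd, Nat.cast_sub (by omega)]
      push_cast
      ring
    obtain ⟨P, hP, hδ⟩ := exists_polytope_of_residues (d := d) (m := 3) (h := a)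
      (r := fun t => if (t : ℕ) < 2 * b - a then 1 else if (t : ℕ) < a + b then 2 else 0)
      hd three_ne_zero (if_pos (by simp; omega)) (by
        have h1 := hsum 1 2
        have h2 : ∀ t : Fin (d + 1), ((if (t : ℕ) < 2 * b - a then 1 else
            if (t : ℕ) < a + b then 2 else 0 : ℤ) : ℝ) =
            (1 - 2) * (if (t : ℕ) < 2 * b - a then 1 else 0) +
              2 * if (t : ℕ) < a + b then 1 else 0 := by
          intro t
          split_ifs <;> first | omega | norm_num
        have h3 : ((∑ t : Fin (d + 1), (if (t : ℕ) < 2 * b - a then 1 else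
            if (t : ℕ) < a + b then 2 else 0 : ℤ) : ℤ) : ℝ) = ((3 : ℕ) * (a : ℤ) : ℤ) := by
          rw [Int.cast_sum, Finset.sum_congr rfl fun t _ => h2 t, h1]
          push_cast
          ring
        exact_mod_cast h3)
    refine ⟨P, hP, fun i => ?_⟩
    have h1 : ∑ t : Fin (d + 1), Int.fract (((1 : ℕ) : ℝ) * (if (t : ℕ) < 2 * b - a then 1 else
        if (t : ℕ) < a + b then 2 else 0 : ℤ) / (3 : ℕ)) = a := by
      have : ∀ t : Fin (d + 1), Int.fract (((1 : ℕ) : ℝ) * (if (t : ℕ) < 2 * b - a then 1 else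
          if (t : ℕ) < a + b then 2 else 0 : ℤ) / (3 : ℕ)) =
          (1 / 3 - 2 / 3) * (if (t : ℕ) < 2 * b - a then 1 else 0) +
            2 / 3 * if (t : ℕ) < a + b then 1 else 0 := by
        intro t
        rw [Int.fract_eq_iff]
        split_ifs <;> first
          | omega
          | exact ⟨by norm_num, by norm_num, 0, by norm_num⟩
      rw [Finset.sum_congr rfl fun t _ => this t, hsum]
      ring
    have h2 : ∑ t : Fin (d + 1), Int.fract (((2 : ℕ) : ℝ) * (if (t : ℕ) < 2 * b - a then 1 else
        if (t : ℕ) < a + b then 2 else 0 : ℤ) / (3 : ℕ)) = b := by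
      have : ∀ t : Fin (d + 1), Int.fract (((2 : ℕ) : ℝ) * (if (t : ℕ) < 2 * b - a then 1 else
          if (t : ℕ) < a + b then 2 else 0 : ℤ) / (3 : ℕ)) =
          (2 / 3 - 1 / 3) * (if (t : ℕ) < 2 * b - a then 1 else 0) +
            1 / 3 * if (t : ℕ) < a + b then 1 else 0 := by
        intro t
        rw [Int.fract_eq_iff]
        split_ifs <;> first
          | omega
          | (refine ⟨by norm_num, by norm_num, 0, ?_⟩; norm_num; done)
          | (refine ⟨by norm_num, by norm_num, 1, ?_⟩; norm_num)
      rw [Finset.sum_congr rfl fun t _ => this t, hsum]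
      ring
    rw [hδ, h, Finset.sum_range_succ, Finset.sum_range_succ, Finset.sum_range_one, h1, h2]
    simp [eq_comm]

end Construction

theorem stmt15 (d : ℕ) (hd : 3 ≤ d) (δv : ℕ → ℕ) (h0 : δv 0 = 1)
    (hzero : ∀ i, d < i → δv i = 0) (h1d : δv d ≤ δv 1)
    (hsum : ∑ i ∈ Finset.range (d + 1), δv i ≤ 3)
    (s : ℕ) (hs1 : δv s ≠ 0) (hs2 : ∀ i, δv i ≠ 0 → i ≤ s) :
    (∃ P : Set (Fin d → ℝ), IsIntegralPolytope P d ∧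
        ∀ i ≤ d, deltaVec P d i = (δv i : ℤ)) ↔
    ((∀ i ≤ s / 2, ∑ j ∈ Finset.range (i + 1), δv j ≤
        ∑ j ∈ Finset.range (i + 1), δv (s - j)) ∧
     (∀ i, 1 ≤ i → i ≤ (d - 1) / 2 →
        ∑ j ∈ Finset.range i, δv (d - 1 - j) ≤ ∑ j ∈ Finset.range i, δv (2 + j))) := by
  rw [inequalities_iff_isSmallShape d hd δv h0 hzero h1d hsum s hs1 hs2]
  constructor
  · rintro ⟨P, hP, hδ⟩
    exact hP.isSmallShape hd h0 hzero hsum hδ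
  · intro h
    obtain ⟨P, hP, hδ⟩ := h.exists_polytope (by omega)
    exact ⟨P, hP, fun i _ => hδ i⟩
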